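/- arXiv:2605.23283 — 8 statements merged into one kernel-verified Lean document; each statement's English description precedes it below -/
import Mathlib

section
/- For every finite simple connected graph G on n vertices (n ≥ 1), the Q-index satisfies q(G) ≤ 2n(1 − 1/ω(G)). -/
open scoped Classical
open Finset

variable {V : Type*}

noncomputable def adjMx [Fintype V] (G : SimpleGraph V) : Matrix V V ℝ :=
  Matrix.of fun u v => if G.Adj u v then 1 else 0

noncomputable def degMx [Fintype V] [DecidableEq V] (G : SimpleGraph V) : Matrix V V ℝ :=
  Matrix.diagonal fun v => ∑ u, if G.Adj v u then (1 : ℝ) else 0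

noncomputable def signlessLap [Fintype V] [DecidableEq V] (G : SimpleGraph V) : Matrix V V ℝ :=
  degMx G + adjMx G

lemma adjMx_isHermitian [Fintype V] (G : SimpleGraph V) : (adjMx G).IsHermitian := by
  ext u v
  simp [adjMx, Matrix.conjTranspose_apply, SimpleGraph.adj_comm]

lemma signlessLap_isHermitian [Fintype V] [DecidableEq V] (G : SimpleGraph V) :
    (signlessLap G).IsHermitian :=
  (Matrix.isHermitian_diagonal _).add (adjMx_isHermitian G)

noncomputable def maxEig [Fintype V] [DecidableEq V] {A : Matrix V V ℝ}
    (hA : A.IsHermitian) : ℝ := ⨆ v, hA.eigenvalues v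

noncomputable def qIndex [Fintype V] [DecidableEq V] (G : SimpleGraph V) : ℝ :=
  maxEig (signlessLap_isHermitian G)

noncomputable def lambda1 [Fintype V] [DecidableEq V] (G : SimpleGraph V) : ℝ :=
  maxEig (adjMx_isHermitian G)

/-- Maximum size of a clique of `G` containing vertex `v`. -/
noncomputable def cliqueAt (G : SimpleGraph V) (v : V) : ℕ :=
  sSup {n | ∃ s : Finset V, G.IsNClique n s ∧ v ∈ s}

/-- Maximum size of a clique of `G` containing both `u` and `v`. -/
noncomputable def cliqueAtEdge (G : SimpleGraph V) (u v : V) : ℕ :=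
  sSup {n | ∃ s : Finset V, G.IsNClique n s ∧ u ∈ s ∧ v ∈ s}

lemma aux_expand {V : Type*} [Fintype V] (M : V → V → ℝ) (hs : ∀ a b, M a b = M b a)
    (u v : V) (hM : M u u + M v v - 2 * M u v = 0) (d : V → ℝ)
    (hd : ∀ f : V → ℝ, ∑ b, d b * f b = f u - f v) (p : V → ℝ) (t : ℝ) :
    ∑ a, ∑ b, (p a + t * d a) * (p b + t * d b) * M a b =
      ∑ a, ∑ b, p a * p b * M a b + 2 * t * ∑ b, p b * (M u b - M v b) := by
  have inner : ∀ a, ∑ b, (p a + t * d a) * (p b + t * d b) * M a b =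
      (p a + t * d a) * (∑ b, p b * M a b + t * (M a u - M a v)) := by
    intro a
    rw [← hd (fun b => M a b), Finset.mul_sum, ← Finset.sum_add_distrib, Finset.mul_sum]
    exact Finset.sum_congr rfl fun b _ => by ring
  have h1 : ∑ a, ∑ b, p a * p b * M a b = ∑ a, p a * ∑ b, p b * M a b :=
    Finset.sum_congr rfl fun a _ => by
      rw [Finset.mul_sum]; exact Finset.sum_congr rfl fun b _ => by ring
  have h2 := hd (fun a => ∑ b, p b * M a b + t * (M a u - M a v))
  have h3 : ∑ b, p b * (M u b - M v b) = ∑ b, p b * M u b - ∑ b, p b * M v b := by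
    rw [← Finset.sum_sub_distrib]
    exact Finset.sum_congr rfl fun b _ => by ring
  have h4 : ∑ a, p a * (M a u - M a v) = ∑ b, p b * (M u b - M v b) :=
    Finset.sum_congr rfl fun b _ => by rw [hs b u, hs b v]
  simp_rw [inner]
  have h5 : ∑ a, (p a + t * d a) * (∑ b, p b * M a b + t * (M a u - M a v)) =
      ∑ a, p a * ∑ b, p b * M a b + t * ∑ a, p a * (M a u - M a v) +
      t * ∑ a, d a * (∑ b, p b * M a b + t * (M a u - M a v)) := by
    rw [Finset.mul_sum, Finset.mul_sum, ← Finset.sum_add_distrib, ← Finset.sum_add_distrib]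
    exact Finset.sum_congr rfl fun b _ => by ring
  rw [h5, h2, h4, h1, h3]
  have := hs v u
  linear_combination t ^ 2 * hM - t ^ 2 * this

lemma aux_red {V : Type*} [Fintype V] (G : SimpleGraph V) (M : V → V → ℝ)
    (hs : ∀ a b, M a b = M b a)
    (hM : ∀ u v, u ≠ v → ¬ G.Adj u v → M u u + M v v - 2 * M u v = 0)
    (hc : ∀ p : V → ℝ, (∀ a, 0 ≤ p a) → G.IsClique {a | p a ≠ 0} →
      ∑ a, ∑ b, p a * p b * M a b ≤ 0) (k : ℕ) :
    ∀ p : V → ℝ, (∀ a, 0 ≤ p a) → (Finset.univ.filter fun a => p a ≠ 0).card ≤ k →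
      ∑ a, ∑ b, p a * p b * M a b ≤ 0 := by
  induction k with
  | zero =>
    intro p hp hk
    apply hc p hp
    have : ∀ a, p a = 0 := by
      simpa [Finset.filter_eq_empty_iff] using hk
    simp [this]
  | succ k ih =>
    intro p hp hk
    by_cases hcl : G.IsClique {a | p a ≠ 0}
    · exact hc p hp hcl
    rw [SimpleGraph.isClique_iff, Set.Pairwise] at hcl
    push Not at hcl
    obtain ⟨u, hu, v, hv, huv, hadj⟩ := hcl
    simp only [Set.mem_ofPred_eq] at hu hv
    -- one half step, in either direction
    have key : ∀ u v : V, p u ≠ 0 → p v ≠ 0 → u ≠ v → ¬ G.Adj u v →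
        0 ≤ ∑ b, p b * (M u b - M v b) → ∑ a, ∑ b, p a * p b * M a b ≤ 0 := by
      intro u v hu hv huv hadj hL
      set d : V → ℝ := fun b => (if b = u then 1 else 0) - (if b = v then 1 else 0) with hdd
      have hd : ∀ f : V → ℝ, ∑ b, d b * f b = f u - f v := by
        intro f
        simp [hdd, sub_mul, Finset.sum_sub_distrib]
      have e := aux_expand M hs u v (hM u v huv hadj) d hd p (p v)
      have hq : ∑ a, ∑ b, (p a + p v * d a) * (p b + p v * d b) * M a b ≤ 0 := by
        apply ih (fun a => p a + p v * d a)
        · intro a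
          have := hp a
          have := hp v
          by_cases h1 : a = u <;> by_cases h2 : a = v
          · exact absurd (h1.symm.trans h2) huv
          · simp only [hdd, h1, huv, if_true, if_false]; rw [← h1]; linarith
          · subst h2; simp [hdd, h1]
          · simp [hdd, h1, h2, hp a]
        · refine Nat.le_of_lt_succ (lt_of_lt_of_le (Finset.card_lt_card ?_) hk)
          rw [Finset.ssubset_iff_of_subset]
          · refine ⟨v, by simp [hv], ?_⟩
            simp [hdd, huv.symm]
          · intro a
            simp only [Finset.mem_filter, Finset.mem_univ, true_and]
            intro h h0
            apply h
            have h1 : a ≠ u := fun h => hu (h ▸ h0)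
            have h2 : a ≠ v := fun h => hv (h ▸ h0)
            simp [hdd, h1, h2, h0]
      have : 0 ≤ p v * ∑ b, p b * (M u b - M v b) := mul_nonneg (hp v) hL
      linarith
    rcases le_total 0 (∑ b, p b * (M u b - M v b)) with h | h
    · exact key u v hu hv huv hadj h
    · refine key v u hv hu huv.symm (fun h => hadj h.symm) ?_
      have : ∑ b, p b * (M v b - M u b) = - ∑ b, p b * (M u b - M v b) := by
        rw [← Finset.sum_neg_distrib]
        exact Finset.sum_congr rfl fun b _ => by ring
      linarith

/-- The inequality for weights on at most `r` points. -/
lemma aux_clique {V : Type*} (s : Finset V) (p x : V → ℝ) (hp : ∀ a ∈ s, 0 < p a)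
    (hne : s.Nonempty) (r : ℝ) (hr : 2 ≤ r) (hsr : (s.card : ℝ) ≤ r) :
    (∑ a ∈ s, p a * x a) ^ 2 ≤
      ∑ a ∈ s, p a * x a ^ 2 * ((∑ b ∈ s, p b) * (1 - 2 / r) + 2 * p a) := by
  set P := ∑ b ∈ s, p b with hP
  have hPpos : 0 < P := Finset.sum_pos hp hne
  have hr0 : 0 < r := by linarith
  set α := P * (1 - 2 / r) with hα
  have hα0 : 0 ≤ α := by
    apply mul_nonneg hPpos.le
    have : 2 / r ≤ 1 := by rw [div_le_one hr0]; exact hr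
    linarith
  have ha : ∀ a ∈ s, 0 < α + 2 * p a := fun a h => by have := hp a h; linarith
  have cs := Finset.sum_sq_le_sum_mul_sum_of_sq_le_mul s
    (r := fun a => p a * x a) (f := fun a => p a * x a ^ 2 * (α + 2 * p a))
    (g := fun a => p a / (α + 2 * p a))
    (fun a h => mul_nonneg (mul_nonneg (hp a h).le (sq_nonneg _)) (ha a h).le)
    (fun a h => (div_pos (hp a h) (ha a h)).le)
    (fun a h => by
      have h3 := (ha a h).ne'
      apply le_of_eq
      rw [mul_assoc, mul_div_cancel₀ _ h3]
      ring)
  have hle : ∑ a ∈ s, p a / (α + 2 * p a) ≤ 1 := by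
    have h1 : ∀ a ∈ s, p a / (α + 2 * p a) ≤ 1 / r + α / P ^ 2 * (p a - P / r) := by
      intro a h
      rw [div_le_iff₀ (ha a h)]
      have e : (1 / r + α / P ^ 2 * (p a - P / r)) * (α + 2 * p a) - p a =
          2 * α / P ^ 2 * (p a - P / r) ^ 2 := by
        rw [hα]; field_simp; ring
      have : 0 ≤ 2 * α / P ^ 2 * (p a - P / r) ^ 2 := by positivity
      linarith
    refine (Finset.sum_le_sum h1).trans ?_
    have e2 : ∑ a ∈ s, (1 / r + α / P ^ 2 * (p a - P / r)) =
        s.card * (1 / r) + α / P ^ 2 * (P - s.card * (P / r)) := by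
      rw [Finset.sum_add_distrib, ← Finset.mul_sum, Finset.sum_sub_distrib]
      simp [hP]
    rw [e2]
    have e3 : 1 - (s.card * (1 / r) + α / P ^ 2 * (P - s.card * (P / r))) =
        (r - s.card) * (2 / r ^ 2) := by
      rw [hα]; field_simp; ring
    have : 0 ≤ (r - s.card) * (2 / r ^ 2) := mul_nonneg (by linarith) (by positivity)
    linarith
  refine cs.trans (mul_le_of_le_one_right ?_ hle)
  exact Finset.sum_nonneg fun a h => mul_nonneg (mul_nonneg (hp a h).le (sq_nonneg _)) (ha a h).le

/-- Form inequality for nonnegative weights supported on a clique. -/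
lemma aux_cliqueForm {V : Type*} [Fintype V] (p x : V → ℝ) (hp : ∀ a, 0 ≤ p a)
    (r : ℕ) (hr : 1 ≤ r) (hsr : (Finset.univ.filter fun a => p a ≠ 0).card ≤ r) :
    ∑ a, ∑ b, p a * p b * ((if a = b then 0 else (x a + x b) ^ 2) -
      2 * (1 - 1 / (r : ℝ)) * (x a ^ 2 + x b ^ 2)) ≤ 0 := by
  have hr0 : (0 : ℝ) < r := by exact_mod_cast hr
  have expand : ∑ a, ∑ b, p a * p b * ((if a = b then 0 else (x a + x b) ^ 2) -
      2 * (1 - 1 / (r : ℝ)) * (x a ^ 2 + x b ^ 2)) =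
      2 * (∑ a, p a * x a) ^ 2 -
      2 * ∑ a, p a * x a ^ 2 * ((∑ b, p b) * (1 - 2 / r) + 2 * p a) := by
    have h1 : ∀ a, ∑ b, p a * p b * ((if a = b then 0 else (x a + x b) ^ 2) -
      2 * (1 - 1 / (r : ℝ)) * (x a ^ 2 + x b ^ 2)) =
        (1 - 2 * (1 - 1 / (r : ℝ))) * (p a * x a ^ 2 * ∑ b, p b) +
        (1 - 2 * (1 - 1 / (r : ℝ))) * (p a * ∑ b, p b * x b ^ 2) +
        2 * (p a * x a * ∑ b, p b * x b) - 4 * p a ^ 2 * x a ^ 2 := by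
      intro a
      have : 4 * p a ^ 2 * x a ^ 2 = ∑ b, if a = b then p a * p b * (x a + x b) ^ 2 else 0 := by
        simp; ring
      rw [this]
      simp only [Finset.mul_sum]
      rw [← Finset.sum_add_distrib, ← Finset.sum_add_distrib, ← Finset.sum_sub_distrib]
      refine Finset.sum_congr rfl fun b _ => ?_
      split_ifs <;> ring
    simp_rw [h1]
    have h2 : ∑ a, p a * x a ^ 2 * ((∑ b, p b) * (1 - 2 / (r : ℝ)) + 2 * p a) =
        (∑ b, p b) * (1 - 2 / (r : ℝ)) * ∑ a, p a * x a ^ 2 + ∑ a, 2 * p a ^ 2 * x a ^ 2 := by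
      rw [Finset.mul_sum, ← Finset.sum_add_distrib]
      exact Finset.sum_congr rfl fun b _ => by ring
    have h3 : ∑ a, 4 * p a ^ 2 * x a ^ 2 = 2 * ∑ a, 2 * p a ^ 2 * x a ^ 2 := by
      rw [Finset.mul_sum]
      exact Finset.sum_congr rfl fun b _ => by ring
    rw [h2, Finset.sum_sub_distrib, Finset.sum_add_distrib, Finset.sum_add_distrib, h3,
      ← Finset.mul_sum, ← Finset.mul_sum, ← Finset.mul_sum, ← Finset.sum_mul, ← Finset.sum_mul,
      ← Finset.sum_mul]
    ring
  have restr : ∀ f : V → ℝ, ∑ a, p a * f a =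
      ∑ a ∈ Finset.univ.filter (fun a => p a ≠ 0), p a * f a := by
    intro f
    symm
    apply Finset.sum_subset (Finset.filter_subset _ _)
    intro a _ h
    have : p a = 0 := by simpa using h
    simp [this]
  set s := Finset.univ.filter (fun a => p a ≠ 0) with hs
  have hpos : ∀ a ∈ s, 0 < p a := fun a h =>
    lt_of_le_of_ne (hp a) (Ne.symm (by simpa [hs] using h))
  rcases s.eq_empty_or_nonempty with h0 | hne
  · have : ∀ a, p a = 0 := by
      simpa [hs, Finset.filter_eq_empty_iff] using h0
    simp [this]
  rw [expand]
  have rP := restr (fun _ => 1)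
  simp only [mul_one] at rP
  have rQ := restr (fun a => x a ^ 2 * ((∑ b, p b) * (1 - 2 / (r : ℝ)) + 2 * p a))
  simp only [← mul_assoc] at rQ
  rw [restr x, rQ, rP]
  rcases Nat.lt_or_ge r 2 with h | h
  · have hr1 : r = 1 := by omega
    subst hr1
    have hc : s.card = 1 := le_antisymm hsr hne.card_pos
    obtain ⟨a, ha⟩ := Finset.card_eq_one.mp hc
    rw [ha]
    simp
    apply le_of_eq
    ring
  · have := aux_clique s p x hpos hne r (by exact_mod_cast h) (by exact_mod_cast hsr)
    linarith

lemma aux_form {V : Type*} [Fintype V] [Nonempty V] (G : SimpleGraph V) (x : V → ℝ) :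
    ∑ a, ∑ b, ((if G.Adj a b then (x a + x b) ^ 2 else 0) -
      2 * (1 - 1 / (G.cliqueNum : ℝ)) * (x a ^ 2 + x b ^ 2)) ≤ 0 := by
  have hr : ∀ s : Finset V, G.IsClique s → s.card ≤ G.cliqueNum := fun s h =>
    SimpleGraph.IsClique.card_le_cliqueNum (tc := h)
  have hr1 : 1 ≤ G.cliqueNum := by
    obtain ⟨v⟩ := ‹Nonempty V›
    simpa using hr {v} (by simp)
  have := aux_red G (fun a b => (if G.Adj a b then (x a + x b) ^ 2 else 0) -
      2 * (1 - 1 / (G.cliqueNum : ℝ)) * (x a ^ 2 + x b ^ 2)) ?_ ?_ ?_ _ (fun _ => 1)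
      (fun _ => zero_le_one) le_rfl
  · simpa using this
  · intro a b
    simp only [G.adj_comm a b, add_comm (x a), add_comm (x a ^ 2)]
  · intro u v _ h
    simp only [h, G.irrefl, if_false]
    ring
  · intro p hp hcl
    refine le_of_eq_of_le ?_ (aux_cliqueForm p x hp G.cliqueNum hr1 (hr _ (by simpa using hcl)))
    refine Finset.sum_congr rfl fun a _ => Finset.sum_congr rfl fun b _ => ?_
    by_cases ha : p a = 0
    · simp [ha]
    by_cases hb : p b = 0
    · simp [hb]
    by_cases hab : a = b
    · subst hab; simp
    · simp [hab, hcl ha hb hab]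

/-- **Abreu–Nikiforov.** For a connected graph `G` on `n ≥ 1` vertices,
`q(G) ≤ 2n(1 - 1/ω(G))`. -/
theorem stmt0 {V : Type*} [Fintype V] [DecidableEq V] [Nonempty V]
    (G : SimpleGraph V) (hconn : G.Connected) :
    qIndex G ≤ 2 * (Fintype.card V : ℝ) * (1 - 1 / (G.cliqueNum : ℝ)) := by
  unfold qIndex maxEig
  apply ciSup_le
  intro i
  set hA := signlessLap_isHermitian G
  have hev := hA.mulVec_eigenvectorBasis i
  set lam := hA.eigenvalues i
  have hn : ‖hA.eigenvectorBasis i‖ = 1 := hA.eigenvectorBasis.orthonormal.1 i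
  set x : V → ℝ := ⇑(hA.eigenvectorBasis i) with hx
  have hxx : ∑ a, x a ^ 2 = 1 := by
    have := EuclideanSpace.real_norm_sq_eq (hA.eigenvectorBasis i)
    rw [hn] at this
    rw [← this]; norm_num
  have hrow : ∀ a, (∑ b, if G.Adj a b then (1 : ℝ) else 0) * x a +
      ∑ b, (if G.Adj a b then x b else 0) = lam * x a := by
    intro a
    have := congrFun hev a
    rw [signlessLap, degMx, Matrix.add_mulVec, Pi.add_apply, Matrix.mulVec_diagonal] at this
    simpa [adjMx, Matrix.mulVec, dotProduct] using this
  have hQ : ∑ a, x a * (lam * x a) = lam := by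
    have h : ∑ a, x a * (lam * x a) = lam * ∑ a, x a ^ 2 := by
      rw [Finset.mul_sum]
      exact Finset.sum_congr rfl fun b _ => by ring
    rw [h, hxx, mul_one]
  have hE1 : ∑ a, ∑ b, (if G.Adj a b then x a ^ 2 + x a * x b else 0) = lam := by
    rw [← hQ]
    refine Finset.sum_congr rfl fun a _ => ?_
    rw [← hrow a, Finset.sum_mul, ← Finset.sum_add_distrib, Finset.mul_sum]
    refine Finset.sum_congr rfl fun b _ => ?_
    split_ifs <;> ring
  have hE2 : ∑ a, ∑ b, (if G.Adj a b then x b ^ 2 + x a * x b else 0) = lam := by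
    rw [← hE1, Finset.sum_comm]
    refine Finset.sum_congr rfl fun a _ => Finset.sum_congr rfl fun b _ => ?_
    simp only [G.adj_comm a b, mul_comm (x a)]
  have hE : ∑ a, ∑ b, (if G.Adj a b then (x a + x b) ^ 2 else 0) = 2 * lam := by
    rw [two_mul]
    nth_rewrite 1 [← hE1]
    rw [← hE2, ← Finset.sum_add_distrib]
    refine Finset.sum_congr rfl fun a _ => ?_
    rw [← Finset.sum_add_distrib]
    refine Finset.sum_congr rfl fun b _ => ?_
    split_ifs <;> ring
  have hN : ∑ a, ∑ b, (x a ^ 2 + x b ^ 2) = 2 * (Fintype.card V : ℝ) := by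
    simp only [Finset.sum_add_distrib, hxx, Finset.sum_const, Finset.card_univ, nsmul_eq_mul,
      ← Finset.mul_sum]
    ring
  have hF := aux_form G x
  simp only [Finset.sum_sub_distrib, ← Finset.mul_sum] at hF
  rw [hE, hN] at hF
  linarith
end

section
/- Let G be a finite simple connected graph on n ≥ 2 vertices. Then q(G) = 2n(1 − 1/ω(G)) holds if and only if: either ω(G) = 2 and G is a complete bipartite graph, or ω(G) ≥ 3 and G is a complete ω(G)-partite graph all of whose parts have the same size (i.e., the vertex set can be partitioned into ω(G) independent sets, with every pair of vertices from different parts adjacent, the parts having equal sizes when ω(G) ≥ 3). -/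
open scoped Classical
open Finset

variable {V : Type*}

namespace QBound
open Matrix

/-- The auxiliary symmetric matrix for the Motzkin–Straus argument. -/
noncomputable def auxM (G : SimpleGraph V) (c : ℝ) (y : V → ℝ) : Matrix V V ℝ :=
  Matrix.of fun u v => (if G.Adj u v then (y u + y v) ^ 2 else 0) - c * (y u ^ 2 + y v ^ 2)

lemma auxM_symm (G : SimpleGraph V) (c : ℝ) (y : V → ℝ) : (auxM G c y)ᵀ = auxM G c y := by
  ext u v
  simp only [auxM, Matrix.transpose_apply, Matrix.of_apply, G.adj_comm v u]
  rw [add_comm (y v), add_comm (y v ^ 2)]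

lemma auxM_nonadj (G : SimpleGraph V) (c : ℝ) (y : V → ℝ) {u v : V} (h : ¬ G.Adj u v) :
    auxM G c y u v = - c * (y u ^ 2 + y v ^ 2) := by
  simp [auxM, h]

lemma auxM_adj (G : SimpleGraph V) (c : ℝ) (y : V → ℝ) {u v : V} (h : G.Adj u v) :
    auxM G c y u v = (y u + y v) ^ 2 - c * (y u ^ 2 + y v ^ 2) := by
  simp [auxM, h]

lemma qf_add [Fintype V] (M : Matrix V V ℝ) (hM : Mᵀ = M) (μ d : V → ℝ) :
    (μ + d) ⬝ᵥ M *ᵥ (μ + d) = μ ⬝ᵥ M *ᵥ μ + 2 * (d ⬝ᵥ M *ᵥ μ) + d ⬝ᵥ M *ᵥ d := by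
  have h : μ ⬝ᵥ M *ᵥ d = d ⬝ᵥ M *ᵥ μ := by
    rw [Matrix.dotProduct_mulVec, ← Matrix.mulVec_transpose, hM, dotProduct_comm]
  simp only [Matrix.mulVec_add, add_dotProduct, dotProduct_add, h]
  ring

/-- The real inequality behind the clique case. -/
lemma clique_ineq (s : Finset V) (w : ℕ) (hw : 2 ≤ w) (hs : s.card ≤ w) (μ y : V → ℝ)
    (hμ : ∀ v ∈ s, 0 < μ v) :
    (∑ v ∈ s, μ v * y v) ^ 2 ≤ 2 * ∑ v ∈ s, μ v ^ 2 * y v ^ 2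
      + (1 - 2 / (w : ℝ)) * ((∑ v ∈ s, μ v) * ∑ v ∈ s, μ v * y v ^ 2) := by
  rcases s.eq_empty_or_nonempty with rfl | hne
  · simp
  set m := ∑ v ∈ s, μ v with hm
  have hmpos : 0 < m := Finset.sum_pos hμ hne
  have hw' : (2 : ℝ) ≤ w := by exact_mod_cast hw
  set p : ℝ := 1 / w with hp
  have hp0 : 0 < p := by positivity
  have hp2 : 0 ≤ 1 - 2 * p := by
    rw [hp, sub_nonneg, mul_one_div, div_le_one (by positivity)]; exact hw'
  have hpw : (2 : ℝ) / w = 2 * p := by rw [hp]; ring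
  rw [hpw]
  set a : V → ℝ := fun v => 2 * μ v + (1 - 2 * p) * m with ha
  have hapos : ∀ v ∈ s, 0 < a v := fun v hv => by
    have := hμ v hv
    have := mul_nonneg hp2 hmpos.le
    simp only [ha]; linarith
  have key : (∑ v ∈ s, μ v * y v) ^ 2 ≤ (∑ v ∈ s, μ v * y v ^ 2 * a v) * ∑ v ∈ s, μ v / a v := by
    apply Finset.sum_sq_le_sum_mul_sum_of_sq_le_mul
    · intro v hv
      have := hμ v hv; have := hapos v hv
      positivity
    · intro v hv
      have := hμ v hv; have := hapos v hv
      positivity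
    · intro v hv
      have := hapos v hv
      apply le_of_eq
      field_simp
  have h1 : ∑ v ∈ s, μ v / a v ≤ 1 := by
    have h2 : ∀ v ∈ s, μ v / a v ≤ 2 * p ^ 2 + (1 - 2 * p) * (μ v / m) := by
      intro v hv
      have h3 := hapos v hv
      rw [div_le_iff₀ h3]
      have h4 : μ v = (μ v / m) * m := by field_simp
      set z := μ v / m with hz
      have h5 : a v = (2 * z + (1 - 2 * p)) * m := by simp only [ha]; rw [h4]; ring
      rw [h5, h4]
      have h6 : 0 ≤ 2 * (1 - 2 * p) * (z - p) ^ 2 * m := by positivity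
      nlinarith
    refine (Finset.sum_le_sum h2).trans ?_
    rw [Finset.sum_add_distrib, Finset.sum_const, nsmul_eq_mul, ← Finset.mul_sum,
      ← Finset.sum_div, ← hm, div_self hmpos.ne']
    have h7 : (s.card : ℝ) ≤ w := by exact_mod_cast hs
    have h8 : (s.card : ℝ) * p ≤ 1 := by
      rw [hp, mul_one_div, div_le_one (by positivity)]; exact h7
    nlinarith
  have h0 : 0 ≤ ∑ v ∈ s, μ v * y v ^ 2 * a v := Finset.sum_nonneg fun v hv => by
    have := hμ v hv; have := hapos v hv
    positivity
  refine key.trans ((mul_le_of_le_one_right h0 h1).trans (le_of_eq ?_))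
  rw [Finset.mul_sum, Finset.mul_sum, Finset.mul_sum, ← Finset.sum_add_distrib]
  refine Finset.sum_congr rfl fun v _ => ?_
  simp only [ha]; ring

lemma auxM_clique [Fintype V] (G : SimpleGraph V) (hw : 2 ≤ G.cliqueNum) (y μ : V → ℝ)
    (hμ : ∀ v, 0 ≤ μ v) (hcl : ∀ u v, μ u ≠ 0 → μ v ≠ 0 → u ≠ v → G.Adj u v) :
    μ ⬝ᵥ auxM G (2 * (1 - 1 / (G.cliqueNum : ℝ))) y *ᵥ μ ≤ 0 := by
  set c := 2 * (1 - 1 / (G.cliqueNum : ℝ)) with hc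
  set s : Finset V := Finset.univ.filter fun v => μ v ≠ 0 with hsdef
  have hcard : s.card ≤ G.cliqueNum := by
    apply SimpleGraph.IsClique.card_le_cliqueNum (tc := ?_)
    intro u hu v hv huv
    simp only [hsdef, Finset.coe_filter, Finset.mem_univ, true_and, Set.mem_ofPred_eq] at hu hv
    exact hcl u v hu hv huv
  have h := clique_ineq s G.cliqueNum hw hcard μ y (fun v hv => by
    have : μ v ≠ 0 := by simpa [hsdef] using hv
    exact lt_of_le_of_ne (hμ v) this.symm)
  have hsum : ∀ g : V → ℝ, (∀ v, μ v = 0 → g v = 0) → ∑ v ∈ s, g v = ∑ v, g v := by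
    intro g hg
    apply Finset.sum_subset (Finset.subset_univ _)
    intro v _ hv
    apply hg
    by_contra hne
    exact hv (by simp [hsdef, hne])
  rw [hsum _ (by simp +contextual), hsum _ (by simp +contextual), hsum _ (by simp +contextual),
    hsum _ (by simp +contextual)] at h
  have hexp : μ ⬝ᵥ auxM G c y *ᵥ μ = ∑ u, ∑ v,
      (μ u * μ v * ((y u + y v) ^ 2 - c * (y u ^ 2 + y v ^ 2))
        - if u = v then 4 * (μ u ^ 2 * y u ^ 2) else 0) := by
    simp only [dotProduct, Matrix.mulVec, Finset.mul_sum]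
    refine Finset.sum_congr rfl fun u _ => Finset.sum_congr rfl fun v _ => ?_
    by_cases huv : u = v
    · subst huv
      rw [auxM_nonadj G c y (G.loopless.irrefl u), if_pos rfl]; ring
    rw [if_neg huv]
    by_cases hu : μ u = 0
    · simp [hu]
    by_cases hv : μ v = 0
    · simp [hv]
    rw [auxM_adj G c y (hcl u v hu hv huv)]; ring
  have hexp2 : μ ⬝ᵥ auxM G c y *ᵥ μ = 2 * (∑ v, μ v * y v) ^ 2
      + 2 * (1 - c) * ((∑ v, μ v) * ∑ v, μ v * y v ^ 2) - 4 * ∑ v, μ v ^ 2 * y v ^ 2 := by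
    rw [hexp]
    simp only [Finset.sum_sub_distrib, Finset.sum_ite_eq, Finset.mem_univ, if_true]
    rw [← Finset.mul_sum (s := Finset.univ) (f := fun u => μ u ^ 2 * y u ^ 2)]
    congr 1
    have h1 : ∑ u, ∑ v, μ u * μ v * ((y u + y v) ^ 2 - c * (y u ^ 2 + y v ^ 2)) =
        ∑ u, ∑ v, (2 * ((μ u * y u) * (μ v * y v)) + (1 - c) * (μ u * (μ v * y v ^ 2))
          + (1 - c) * ((μ u * y u ^ 2) * μ v)) :=
      Finset.sum_congr rfl fun u _ => Finset.sum_congr rfl fun v _ => by ring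
    rw [h1]
    simp only [Finset.sum_add_distrib, ← Finset.mul_sum, ← Finset.sum_mul]
    ring
  rw [hexp2]
  have hc' : 1 - c = -(1 - 2 / (G.cliqueNum : ℝ)) := by rw [hc]; ring
  rw [hc']
  nlinarith

/-- The Motzkin–Straus type inequality. -/
lemma auxM_nonpos [Fintype V] (G : SimpleGraph V) (hw : 2 ≤ G.cliqueNum) (y : V → ℝ) :
    ∀ (k : ℕ) (μ : V → ℝ), (∀ v, 0 ≤ μ v) → (Finset.univ.filter fun v => μ v ≠ 0).card = k →
    μ ⬝ᵥ auxM G (2 * (1 - 1 / (G.cliqueNum : ℝ))) y *ᵥ μ ≤ 0 := by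
  intro k
  induction k using Nat.strong_induction_on with
  | _ k ih =>
  intro μ hμ hk
  by_cases hcl : ∀ u v, μ u ≠ 0 → μ v ≠ 0 → u ≠ v → G.Adj u v
  · exact auxM_clique G hw y μ hμ hcl
  push Not at hcl
  obtain ⟨u, v, hu, hv, huv, hnadj⟩ := hcl
  set c := 2 * (1 - 1 / (G.cliqueNum : ℝ)) with hc
  set M := auxM G c y with hM
  have step : ∀ a b : V, μ a ≠ 0 → μ b ≠ 0 → a ≠ b → ¬ G.Adj a b →
      0 ≤ (Pi.single a (1:ℝ) - Pi.single b (1:ℝ)) ⬝ᵥ M *ᵥ μ → μ ⬝ᵥ M *ᵥ μ ≤ 0 := by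
    intro a b ha hb hab hnab hl
    set e : V → ℝ := Pi.single a (1:ℝ) - Pi.single b (1:ℝ) with he
    have hee : e ⬝ᵥ M *ᵥ e = 0 := by
      simp only [he, Matrix.mulVec_sub, sub_dotProduct, dotProduct_sub, single_one_dotProduct,
        Matrix.mulVec_single_one, Matrix.col_apply, hM]
      rw [auxM_nonadj G c y hnab, auxM_nonadj G c y (fun h => hnab h.symm),
        auxM_nonadj G c y (G.loopless.irrefl a), auxM_nonadj G c y (G.loopless.irrefl b)]
      ring
    have hq := qf_add M (auxM_symm G c y) μ (μ b • e)
    rw [Matrix.mulVec_smul, smul_dotProduct, smul_dotProduct, dotProduct_smul, hee] at hq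
    simp only [smul_eq_mul, mul_zero, add_zero] at hq
    have hval : ∀ x, (μ + μ b • e) x = if x = a then μ a + μ b else if x = b then 0 else μ x := by
      intro x
      simp only [he, Pi.add_apply, Pi.smul_apply, Pi.sub_apply, Pi.single_apply, smul_eq_mul]
      by_cases hxa : x = a
      · subst hxa; simp [hab]
      · by_cases hxb : x = b
        · subst hxb; simp [hxa]
        · simp [hxa, hxb]
    have hlt : (Finset.univ.filter fun x => (μ + μ b • e) x ≠ 0).card < k := by
      rw [← hk]
      apply Finset.card_lt_card
      rw [Finset.ssubset_iff_of_subset]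
      · refine ⟨b, by simpa using hb, ?_⟩
        simp [hval, hab.symm]
      · intro x hx
        simp only [Finset.mem_filter, Finset.mem_univ, true_and, hval] at hx ⊢
        by_cases hxa : x = a
        · subst hxa; exact ha
        · by_cases hxb : x = b
          · subst hxb; exact hb
          · simpa [hxa, hxb] using hx
    have := ih _ hlt (μ + μ b • e) (fun x => by
      rw [hval]
      split_ifs
      · exact add_nonneg (hμ _) (hμ _)
      · exact le_rfl
      · exact hμ _) rfl
    have h2 := mul_nonneg (hμ b) hl
    linarith
  rcases le_total 0 ((Pi.single u (1:ℝ) - Pi.single v (1:ℝ)) ⬝ᵥ M *ᵥ μ) with h | h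
  · exact step u v hu hv huv hnadj h
  · refine step v u hv hu huv.symm (fun h => hnadj h.symm) ?_
    rw [← neg_sub, neg_dotProduct]
    linarith

lemma signlessLap_mulVec [Fintype V] [DecidableEq V] (G : SimpleGraph V) (y : V → ℝ) (u : V) :
    (signlessLap G *ᵥ y) u = ∑ v, (if G.Adj u v then y u + y v else 0) := by
  rw [signlessLap, Matrix.add_mulVec, Pi.add_apply, degMx, Matrix.mulVec_diagonal]
  simp only [Matrix.mulVec, dotProduct, adjMx, Matrix.of_apply]
  rw [Finset.sum_mul, ← Finset.sum_add_distrib]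
  refine Finset.sum_congr rfl fun v _ => ?_
  split_ifs <;> ring

lemma one_auxM_one [Fintype V] [DecidableEq V] (G : SimpleGraph V) (c : ℝ) (y : V → ℝ) :
    (fun _ => 1 : V → ℝ) ⬝ᵥ auxM G c y *ᵥ (fun _ => 1) =
      2 * (y ⬝ᵥ signlessLap G *ᵥ y) - 2 * (c * Fintype.card V * (y ⬝ᵥ y)) := by
  have h1 : y ⬝ᵥ signlessLap G *ᵥ y = ∑ u, ∑ v, y u * (if G.Adj u v then y u + y v else 0) := by
    simp only [dotProduct, signlessLap_mulVec, Finset.mul_sum]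
  have h2 : y ⬝ᵥ signlessLap G *ᵥ y = ∑ u, ∑ v, y v * (if G.Adj u v then y u + y v else 0) := by
    rw [h1, Finset.sum_comm]
    refine Finset.sum_congr rfl fun u _ => Finset.sum_congr rfl fun v _ => ?_
    rw [G.adj_comm v u, add_comm (y v)]
  have h3 : ∑ u : V, ∑ v : V, c * (y u ^ 2 + y v ^ 2) = 2 * (c * Fintype.card V * (y ⬝ᵥ y)) := by
    simp only [dotProduct, ← Finset.mul_sum, Finset.sum_add_distrib, Finset.sum_const,
      nsmul_eq_mul, Finset.card_univ, ← pow_two]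
    ring
  have h4 : 2 * (y ⬝ᵥ signlessLap G *ᵥ y) =
      y ⬝ᵥ signlessLap G *ᵥ y + y ⬝ᵥ signlessLap G *ᵥ y := two_mul _
  rw [h4, ← h3]
  nth_rewrite 1 [h1]
  rw [h2]
  simp only [← Finset.sum_add_distrib, ← Finset.sum_sub_distrib, dotProduct, Matrix.mulVec,
    one_mul, mul_one, auxM, Matrix.of_apply]
  refine Finset.sum_congr rfl fun u _ => Finset.sum_congr rfl fun v _ => ?_
  split_ifs <;> ring

/-- The bound `2n(1-1/ω)`. -/
noncomputable def bnd [Fintype V] (G : SimpleGraph V) : ℝ :=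
  2 * (Fintype.card V : ℝ) * (1 - 1 / (G.cliqueNum : ℝ))

lemma rayleigh_le [Fintype V] [DecidableEq V] (G : SimpleGraph V) (hw : 2 ≤ G.cliqueNum)
    (y : V → ℝ) : y ⬝ᵥ signlessLap G *ᵥ y ≤ bnd G * (y ⬝ᵥ y) := by
  have h := auxM_nonpos G hw y _ (fun _ => 1) (fun _ => zero_le_one) rfl
  rw [one_auxM_one] at h
  have : 2 * (1 - 1 / (G.cliqueNum : ℝ)) * Fintype.card V = bnd G := by rw [bnd]; ring
  rw [this] at h
  linarith

lemma kernel_of_eq [Fintype V] [DecidableEq V] (G : SimpleGraph V) (hw : 2 ≤ G.cliqueNum)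
    (y : V → ℝ) (hy : bnd G * (y ⬝ᵥ y) ≤ y ⬝ᵥ signlessLap G *ᵥ y) :
    signlessLap G *ᵥ y = bnd G • y := by
  have hval : ∀ x : V → ℝ, star x ⬝ᵥ (bnd G • (1 : Matrix V V ℝ) - signlessLap G) *ᵥ x =
      bnd G * (x ⬝ᵥ x) - x ⬝ᵥ signlessLap G *ᵥ x := by
    intro x
    simp [Matrix.sub_mulVec, Matrix.smul_mulVec, dotProduct_sub]
  have hpsd : (bnd G • (1 : Matrix V V ℝ) - signlessLap G).PosSemidef := by
    apply Matrix.PosSemidef.of_dotProduct_mulVec_nonneg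
    · refine Matrix.IsHermitian.sub ?_ (signlessLap_isHermitian G)
      ext i j
      simp [Matrix.one_apply, eq_comm]
    · intro x
      rw [hval]
      have := rayleigh_le G hw x
      linarith
  have h0 := (hpsd.dotProduct_mulVec_zero_iff y).1 (by
    rw [hval]
    have := rayleigh_le G hw y
    linarith)
  rw [Matrix.sub_mulVec, Matrix.smul_mulVec, Matrix.one_mulVec, sub_eq_zero] at h0
  exact h0.symm

lemma qIndex_eq_iff [Fintype V] [DecidableEq V] [Nonempty V] (G : SimpleGraph V)
    (hw : 2 ≤ G.cliqueNum) :
    qIndex G = bnd G ↔ ∃ x : V → ℝ, x ≠ 0 ∧ signlessLap G *ᵥ x = bnd G • x := by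
  have hH := signlessLap_isHermitian G
  have hne : ∀ i, (hH.eigenvectorBasis i).ofLp ≠ 0 := by
    intro i h0
    exact hH.eigenvectorBasis.toBasis.ne_zero i (by simpa using h0)
  have hle : ∀ i, hH.eigenvalues i ≤ bnd G := by
    intro i
    have h := rayleigh_le G hw (hH.eigenvectorBasis i).ofLp
    rw [hH.mulVec_eigenvectorBasis, dotProduct_smul, smul_eq_mul] at h
    have hpos : 0 < (hH.eigenvectorBasis i).ofLp ⬝ᵥ (hH.eigenvectorBasis i).ofLp :=
      lt_of_le_of_ne (by simpa using dotProduct_star_self_nonneg (hH.eigenvectorBasis i).ofLp)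
        (fun h => hne i (dotProduct_self_eq_zero.1 h.symm))
    exact le_of_mul_le_mul_right h hpos
  constructor
  · intro h
    obtain ⟨i, hi⟩ := exists_eq_ciSup_of_finite (f := hH.eigenvalues)
    refine ⟨(hH.eigenvectorBasis i).ofLp, hne i, ?_⟩
    rw [hH.mulVec_eigenvectorBasis, hi]
    rw [qIndex, maxEig] at h
    rw [h]
  · rintro ⟨x, hx, hQ⟩
    have hev : Module.End.HasEigenvalue (Matrix.toLin' (signlessLap G)) (bnd G) := by
      apply Module.End.hasEigenvalue_of_hasEigenvector (x := x)
      exact Module.End.hasEigenvector_iff.2 ⟨Module.End.mem_eigenspace_iff.2 (by simpa using hQ), hx⟩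
    rw [Module.End.hasEigenvalue_iff_mem_spectrum, Matrix.spectrum_toLin',
      hH.spectrum_real_eq_range_eigenvalues] at hev
    obtain ⟨i, hi⟩ := hev
    rw [qIndex, maxEig]
    apply le_antisymm
    · exact ciSup_le hle
    · rw [← hi]
      exact le_ciSup (f := hH.eigenvalues) (Set.finite_range _).bddAbove i

lemma exists_pos_eigenvector [Fintype V] [DecidableEq V] (G : SimpleGraph V)
    (hw : 2 ≤ G.cliqueNum) (hconn : G.Connected) (x : V → ℝ) (hx : x ≠ 0)
    (hQ : signlessLap G *ᵥ x = bnd G • x) :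
    ∃ y : V → ℝ, (∀ v, 0 < y v) ∧ signlessLap G *ᵥ y = bnd G • y := by
  set y : V → ℝ := fun v => |x v| with hy
  have hyQ : signlessLap G *ᵥ y = bnd G • y := by
    apply kernel_of_eq G hw
    have h1 : y ⬝ᵥ y = x ⬝ᵥ x := by simp [dotProduct, hy]
    have h2 : bnd G * (x ⬝ᵥ x) = x ⬝ᵥ signlessLap G *ᵥ x := by
      rw [hQ, dotProduct_smul, smul_eq_mul]
    rw [h1, h2]
    simp only [dotProduct, signlessLap_mulVec, Finset.mul_sum]
    refine Finset.sum_le_sum fun u _ => Finset.sum_le_sum fun v _ => ?_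
    split_ifs
    · have := le_abs_self (x u * x v)
      rw [abs_mul] at this
      have h3 := abs_mul_abs_self (x u)
      simp only [hy]
      nlinarith
    · simp
  refine ⟨y, ?_, hyQ⟩
  have hnn : ∀ v, 0 ≤ y v := fun v => abs_nonneg _
  have hprop : ∀ u v, G.Adj u v → y u = 0 → y v = 0 := by
    intro u v huv hu
    have h := congrFun hyQ u
    rw [signlessLap_mulVec, Pi.smul_apply, hu, smul_zero] at h
    rw [Finset.sum_eq_zero_iff_of_nonneg] at h
    · simpa [huv] using h v (Finset.mem_univ _)
    · intro w _
      split_ifs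
      · simpa using hnn w
      · exact le_rfl
  intro v
  apply lt_of_le_of_ne (hnn v)
  intro h0
  apply hx
  funext w
  have hall : ∀ a b : V, G.Walk a b → y a = 0 → y b = 0 := by
    intro a b p
    induction p with
    | nil => exact id
    | cons h _ ih => exact fun h0 => ih (hprop _ _ h h0)
  obtain ⟨p⟩ := hconn.preconnected v w
  have := hall _ _ p h0.symm
  simpa [hy] using this

lemma nonadj_trans [Fintype V] [DecidableEq V] (G : SimpleGraph V)
    (hw : 2 ≤ G.cliqueNum) (y : V → ℝ) (hy : ∀ v, 0 < y v)
    (hQ : signlessLap G *ᵥ y = bnd G • y) (u v w : V) (huv : ¬ G.Adj u v) (hvw : ¬ G.Adj v w) :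
    ¬ G.Adj u w := by
  intro huw
  have hne1 : u ≠ v := by rintro rfl; exact hvw huw
  have hne2 : w ≠ v := by rintro rfl; exact huv huw
  have hne3 : u ≠ w := huw.ne
  set c := 2 * (1 - 1 / (G.cliqueNum : ℝ)) with hc
  set M := auxM G c y with hM
  have h0 : (fun _ => 1 : V → ℝ) ⬝ᵥ M *ᵥ (fun _ => 1) = 0 := by
    rw [hM, one_auxM_one, hQ, dotProduct_smul, smul_eq_mul]
    have : c * Fintype.card V = bnd G := by rw [bnd, hc]; ring
    rw [this]; ring
  set e : V → ℝ := Pi.single u (1:ℝ) + Pi.single w (1:ℝ) - (2:ℝ) • Pi.single v (1:ℝ) with he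
  have hee : e ⬝ᵥ M *ᵥ e = 2 * (y u + y w) ^ 2 := by
    simp only [he, Matrix.mulVec_sub, Matrix.mulVec_add, Matrix.mulVec_smul, sub_dotProduct,
      add_dotProduct, smul_dotProduct, dotProduct_sub, dotProduct_add, dotProduct_smul,
      single_one_dotProduct, Matrix.mulVec_single_one, Matrix.col_apply, hM, smul_eq_mul]
    rw [auxM_nonadj G c y huv, auxM_nonadj G c y (fun h => huv h.symm),
      auxM_nonadj G c y hvw, auxM_nonadj G c y (fun h => hvw h.symm),
      auxM_nonadj G c y (G.loopless.irrefl u), auxM_nonadj G c y (G.loopless.irrefl v),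
      auxM_nonadj G c y (G.loopless.irrefl w), auxM_adj G c y huw, auxM_adj G c y huw.symm]
    ring
  have habs : ∀ x, |e x| ≤ 2 := by
    intro x
    simp only [he, Pi.add_apply, Pi.sub_apply, Pi.smul_apply, Pi.single_apply, smul_eq_mul]
    rw [abs_le]
    split_ifs <;> norm_num
  have hq : ∀ t : ℝ, |t| ≤ 1 / 2 →
      2 * (t * (e ⬝ᵥ M *ᵥ (fun _ => 1))) + t * (t * (2 * (y u + y w) ^ 2)) ≤ 0 := by
    intro t ht
    have h1 := qf_add M (auxM_symm G c y) (fun _ => 1) (t • e)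
    rw [Matrix.mulVec_smul, smul_dotProduct, smul_dotProduct, dotProduct_smul, hee, h0] at h1
    have h2 := auxM_nonpos G hw y _ ((fun _ => 1) + t • e) (fun x => by
      simp only [Pi.add_apply, Pi.smul_apply, smul_eq_mul]
      have h3 : |t * e x| ≤ 1 / 2 * 2 := by
        rw [abs_mul]
        exact mul_le_mul ht (habs x) (abs_nonneg _) (by norm_num)
      have := (abs_le.1 h3).1
      linarith) rfl
    simp only [smul_eq_mul] at h1
    rw [← hc, ← hM] at h2
    linarith
  have h1 := hq (1 / 2) (by norm_num [abs_of_pos])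
  have h2 := hq (-(1 / 2)) (by norm_num [abs_of_pos])
  have h3 : 0 < (y u + y w) ^ 2 := by
    have := hy u; have := hy w
    positivity
  nlinarith

lemma exists_partition [Fintype V] (G : SimpleGraph V)
    (ht : ∀ u v w, ¬ G.Adj u v → ¬ G.Adj v w → ¬ G.Adj u w) (k : ℕ) (hk : k = G.cliqueNum) :
    ∃ f : V → Fin k, Function.Surjective f ∧ ∀ u v, G.Adj u v ↔ f u ≠ f v := by
  let S : Setoid V := ⟨fun u v => ¬ G.Adj u v, ⟨fun u => G.loopless.irrefl u,
    fun h h' => h h'.symm, fun h h' => ht _ _ _ h h'⟩⟩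
  have hrel : ∀ u v, (Quotient.mk S u = Quotient.mk S v) ↔ ¬ G.Adj u v := fun u v => Quotient.eq
  have hcard : Fintype.card (Quotient S) = k := by
    rw [hk]
    apply le_antisymm
    · have hcl : G.IsClique ((Finset.univ.image (Quotient.out (s := S)) : Finset V) : Set V) := by
        intro a ha b hb hab
        simp only [Finset.coe_image, Finset.coe_univ, Set.image_univ, Set.mem_range] at ha hb
        obtain ⟨p, rfl⟩ := ha
        obtain ⟨q, rfl⟩ := hb
        by_contra hn
        have := (hrel _ _).2 hn
        rw [Quotient.out_eq, Quotient.out_eq] at this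
        exact hab (by rw [this])
      have h := SimpleGraph.IsClique.card_le_cliqueNum (tc := hcl)
      rwa [Finset.card_image_of_injective _ Quotient.out_injective, Finset.card_univ] at h
    · obtain ⟨s, hs⟩ := G.exists_isNClique_cliqueNum
      rw [← hs.card_eq, ← Finset.card_univ]
      apply Finset.card_le_card_of_injOn (Quotient.mk S) (fun _ _ => Finset.mem_coe.2 (Finset.mem_univ _))
      intro a ha b hb hab
      by_contra hne
      exact (hrel a b).1 hab (hs.isClique ha hb hne)
  let E := Fintype.equivFinOfCardEq hcard
  refine ⟨fun v => E (Quotient.mk S v), E.surjective.comp Quotient.mk_surjective, fun u v => ?_⟩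
  rw [Ne, E.apply_eq_iff_eq, hrel, not_not]

lemma sum_inv_fiber [Fintype V] {k : ℕ} (f : V → Fin k) (hf : Function.Surjective f) :
    ∑ v, (1 : ℝ) / ((Finset.univ.filter fun w => f w = f v).card : ℝ) = k := by
  rw [← Finset.sum_fiberwise (s := Finset.univ) (g := f)]
  have : ∀ j : Fin k, ∑ v ∈ Finset.univ.filter (fun v => f v = j),
      (1 : ℝ) / ((Finset.univ.filter fun w => f w = f v).card : ℝ) = 1 := by
    intro j
    have h1 : ∀ v ∈ Finset.univ.filter (fun v => f v = j),
      (1 : ℝ) / ((Finset.univ.filter fun w => f w = f v).card : ℝ) =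
        1 / ((Finset.univ.filter fun w => f w = j).card : ℝ) := by
      intro v hv
      rw [(Finset.mem_filter.1 hv).2]
    rw [Finset.sum_congr rfl h1, Finset.sum_const, nsmul_eq_mul]
    obtain ⟨v, hv⟩ := hf j
    have : 0 < (Finset.univ.filter fun w => f w = j).card :=
      Finset.card_pos.2 ⟨v, by simp [hv]⟩
    have : (0:ℝ) < ((Finset.univ.filter fun w => f w = j).card : ℝ) := by exact_mod_cast this
    field_simp
  rw [Finset.sum_congr rfl fun j _ => this j]
  simp

lemma eigen_fiber [Fintype V] [DecidableEq V] (G : SimpleGraph V) {k : ℕ} (f : V → Fin k)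
    (hadj : ∀ u v, G.Adj u v ↔ f u ≠ f v) (y : V → ℝ) (u : V) :
    (signlessLap G *ᵥ y) u =
      ((Fintype.card V : ℝ) - ((Finset.univ.filter fun w => f w = f u).card : ℝ)) * y u
        + ((∑ w, y w) - ∑ w ∈ Finset.univ.filter (fun w => f w = f u), y w) := by
  rw [signlessLap_mulVec]
  have h1 : ∀ w, (if G.Adj u w then y u + y w else 0) =
      (y u + y w) - (if f w = f u then y u + y w else 0) := by
    intro w
    by_cases h : f w = f u
    · simp [hadj, h]
    · simp [hadj, h, Ne.symm h]
  rw [Finset.sum_congr rfl fun w _ => h1 w, Finset.sum_sub_distrib, ← Finset.sum_filter,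
    Finset.sum_add_distrib, Finset.sum_add_distrib, Finset.sum_const, Finset.sum_const,
    nsmul_eq_mul, nsmul_eq_mul, Finset.card_univ]
  ring

lemma equal_sizes [Fintype V] [DecidableEq V] [Nonempty V] (G : SimpleGraph V) {k : ℕ}
    (hk : k = G.cliqueNum)
    (hw : 3 ≤ k) (f : V → Fin k) (hf : Function.Surjective f)
    (hadj : ∀ u v, G.Adj u v ↔ f u ≠ f v) (y : V → ℝ) (hy : ∀ v, 0 < y v)
    (hQ : signlessLap G *ᵥ y = bnd G • y) (v : V) :
    (((Finset.univ.filter fun w => f w = f v).card : ℕ) : ℝ) = Fintype.card V / k := by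
  set N : V → ℝ := fun u => ((Finset.univ.filter fun w => f w = f u).card : ℝ) with hN
  set n : ℝ := (Fintype.card V : ℝ) with hn
  set S : ℝ := ∑ w, y w with hS
  have hnpos : 0 < n := by rw [hn]; exact_mod_cast Fintype.card_pos
  have hSpos : 0 < S := Finset.sum_pos (fun v _ => hy v) Finset.univ_nonempty
  have hNpos : ∀ u, 0 < N u := fun u => by
    have : 0 < (Finset.univ.filter fun w => f w = f u).card :=
      Finset.card_pos.2 ⟨u, by simp⟩
    simp only [hN]; exact_mod_cast this
  have hk3 : (3:ℝ) ≤ k := by exact_mod_cast hw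
  set p : ℝ := 1 / k with hp
  have hp0 : 0 < p := by positivity
  have hpk : (k:ℝ) * p = 1 := by rw [hp]; field_simp
  have hp2 : 0 < 1 - 2 * p := by nlinarith
  have hC : bnd G = 2 * n * (1 - p) := by rw [bnd, hp, hk]
  have heig : ∀ u, (bnd G - n + N u) * y u =
      S - ∑ w ∈ Finset.univ.filter (fun w => f w = f u), y w := by
    intro u
    have h := congrFun hQ u
    rw [eigen_fiber G f hadj, Pi.smul_apply, smul_eq_mul] at h
    simp only [hN]
    linarith
  have hpos' : ∀ u, 0 < bnd G - n + N u := fun u => by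
    have := hNpos u
    rw [hC]; nlinarith
  have hconst : ∀ u w, f w = f u → y w = y u := by
    intro u w h
    have h1 := heig u
    have h2 := heig w
    have h3 : N w = N u := by simp only [hN, h]
    rw [h, h3, ← h1] at h2
    exact mul_left_cancel₀ (hpos' u).ne' h2
  have heig2 : ∀ u, (n * (1 - 2 * p) + 2 * N u) * y u = S := by
    intro u
    have h1 := heig u
    rw [Finset.sum_congr rfl (fun w hw => hconst u w (Finset.mem_filter.1 hw).2), Finset.sum_const,
      nsmul_eq_mul, hC] at h1
    change _ = S - N u * y u at h1
    linarith
  set a : V → ℝ := fun u => n * (1 - 2 * p) + 2 * N u with ha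
  have hapos : ∀ u, 0 < a u := fun u => by
    have := hNpos u; simp only [ha]; positivity
  have hsum1 : ∑ u, 1 / a u = 1 := by
    have h1 : ∀ u, 1 / a u = y u / S := by
      intro u
      rw [div_eq_div_iff (hapos u).ne' hSpos.ne', one_mul, ← heig2 u, mul_comm]
    rw [Finset.sum_congr rfl fun u _ => h1 u, ← Finset.sum_div, ← hS, div_self hSpos.ne']
  have hsum2 : ∑ u, (2 * p ^ 2 * (1 / N u) + (1 - 2 * p) / n) = 1 := by
    rw [Finset.sum_add_distrib, ← Finset.mul_sum, sum_inv_fiber f hf, Finset.sum_const,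
      nsmul_eq_mul, Finset.card_univ, ← hn, mul_div_cancel₀ _ hnpos.ne']
    linear_combination 2 * p * hpk
  have hid : ∀ u, (2 * p ^ 2 * (1 / N u) + (1 - 2 * p) / n) - 1 / a u =
      2 * (1 - 2 * p) * (N u - p * n) ^ 2 / (n * N u * a u) := by
    intro u
    have h1 := (hapos u).ne'
    have h2 := (hNpos u).ne'
    have h3 := hnpos.ne'
    rw [sub_eq_iff_eq_add]
    field_simp
    simp only [ha]
    ring
  have hle : ∀ u ∈ (Finset.univ : Finset V),
      1 / a u ≤ 2 * p ^ 2 * (1 / N u) + (1 - 2 * p) / n := by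
    intro u _
    have h1 := hapos u
    have h2 := hNpos u
    rw [← sub_nonneg, hid]
    positivity
  have heq := (Finset.sum_eq_sum_iff_of_le hle).1 (hsum1.trans hsum2.symm) v (Finset.mem_univ _)
  have h0 := hid v
  rw [← heq, sub_self, eq_comm, div_eq_zero_iff] at h0
  have h1 := hapos v
  have h2 := hNpos v
  have h3 : n * N v * a v ≠ 0 := by positivity
  have h4 := h0.resolve_right h3
  have h5 : (N v - p * n) ^ 2 = 0 := by
    rcases mul_eq_zero.1 h4 with h | h
    · linarith
    · exact h
  have h6 : N v = p * n := by
    have := pow_eq_zero_iff (two_ne_zero) |>.1 h5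
    linarith
  change N v = _
  rw [h6, hp]; ring

lemma two_le_cliqueNum [Fintype V] (G : SimpleGraph V) (hcard : 2 ≤ Fintype.card V)
    (hconn : G.Connected) : 2 ≤ G.cliqueNum := by
  have : Nontrivial V := Fintype.one_lt_card_iff_nontrivial.1 hcard
  obtain ⟨v⟩ := hconn.nonempty
  obtain ⟨w, hw⟩ := hconn.preconnected.exists_adj_of_nontrivial v
  have hcl : G.IsClique (({v, w} : Finset V) : Set V) := by
    simp [SimpleGraph.isClique_pair, hw]
  have h := SimpleGraph.IsClique.card_le_cliqueNum (tc := hcl)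
  rwa [Finset.card_pair hw.ne] at h

lemma eigen_bipartite [Fintype V] [DecidableEq V] (G : SimpleGraph V) (hw : G.cliqueNum = 2)
    (f : V → Fin 2) (hf : Function.Surjective f) (hadj : ∀ u v, G.Adj u v ↔ f u ≠ f v) :
    ∃ x : V → ℝ, x ≠ 0 ∧ signlessLap G *ᵥ x = bnd G • x := by
  set x : V → ℝ := fun u => ∑ w, if f u ≠ f w then (1:ℝ) else 0 with hx
  have hxy : ∀ u w, f u ≠ f w → x u + x w = Fintype.card V := by
    intro u w h
    simp only [hx]
    rw [← Finset.sum_add_distrib]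
    have : ∀ z, ((if f u ≠ f z then (1:ℝ) else 0) + if f w ≠ f z then (1:ℝ) else 0) = 1 := by
      intro z
      by_cases h1 : f u = f z
      · have h2 : f w ≠ f z := fun h2 => h (h1.trans h2.symm)
        simp [h1, h2]
      · have h2 : f w = f z := by omega
        simp [h1, h2]
    rw [Finset.sum_congr rfl fun z _ => this z]
    simp
  refine ⟨x, ?_, ?_⟩
  · intro h0
    obtain ⟨u, hu⟩ := hf 0
    obtain ⟨w, hw⟩ := hf 1
    have h := hxy u w (by rw [hu, hw]; decide)
    rw [h0] at h
    have : 0 < Fintype.card V := Fintype.card_pos_iff.2 ⟨u⟩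
    simp only [Pi.zero_apply, add_zero] at h
    have h' : Fintype.card V = 0 := by exact_mod_cast h.symm
    omega
  · funext u
    rw [signlessLap_mulVec, Pi.smul_apply, smul_eq_mul, bnd, hw]
    have : ∀ w, (if G.Adj u w then x u + x w else 0) =
        Fintype.card V * (if f u ≠ f w then (1:ℝ) else 0) := by
      intro w
      by_cases h : f u ≠ f w
      · rw [if_pos ((hadj u w).2 h), if_pos h, hxy u w h, mul_one]
      · rw [if_neg (fun h' => h ((hadj u w).1 h')), if_neg h, mul_zero]
    rw [Finset.sum_congr rfl fun w _ => this w, ← Finset.mul_sum]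
    change _ * x u = _
    push_cast
    ring

lemma eigen_regular [Fintype V] [DecidableEq V] [Nonempty V] (G : SimpleGraph V)
    (hw : 3 ≤ G.cliqueNum)
    (f : V → Fin G.cliqueNum) (hadj : ∀ u v, G.Adj u v ↔ f u ≠ f v)
    (heq : ∀ i j : Fin G.cliqueNum, (Finset.univ.filter fun v => f v = i).card
              = (Finset.univ.filter fun v => f v = j).card) :
    ∃ x : V → ℝ, x ≠ 0 ∧ signlessLap G *ᵥ x = bnd G • x := by
  refine ⟨fun _ => 1, fun h => one_ne_zero (congrFun h (Classical.arbitrary V)), ?_⟩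
  funext u
  rw [eigen_fiber G f hadj, Pi.smul_apply, smul_eq_mul, bnd]
  have h1 : Fintype.card V = G.cliqueNum * (Finset.univ.filter fun v => f v = f u).card := by
    rw [← Finset.card_univ, Finset.card_eq_sum_card_fiberwise (f := f) (t := Finset.univ)
      (fun _ _ => Finset.mem_coe.2 (Finset.mem_univ _)), Finset.sum_congr rfl fun i _ => heq i (f u)]
    simp
  have h2 : (Fintype.card V : ℝ) =
      G.cliqueNum * ((Finset.univ.filter fun v => f v = f u).card : ℝ) := by exact_mod_cast h1
  have h3 : (G.cliqueNum : ℝ) ≠ 0 := by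
    have : G.cliqueNum ≠ 0 := by omega
    exact_mod_cast this
  simp only [Finset.sum_const, nsmul_eq_mul, mul_one, Finset.card_univ]
  rw [h2]
  field_simp
  ring

end QBound

/-- Equality in the Abreu–Nikiforov bound holds iff `G` is complete bipartite (when `ω = 2`)
or a regular complete `ω`-partite graph (when `ω ≥ 3`). -/
theorem stmt1 {V : Type*} [Fintype V] [DecidableEq V]
    (G : SimpleGraph V) (hcard : 2 ≤ Fintype.card V) (hconn : G.Connected) :
    qIndex G = 2 * (Fintype.card V : ℝ) * (1 - 1 / (G.cliqueNum : ℝ)) ↔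
      ((G.cliqueNum = 2 ∧ ∃ f : V → Fin 2, Function.Surjective f ∧
          ∀ u v, G.Adj u v ↔ f u ≠ f v) ∨
       (3 ≤ G.cliqueNum ∧ ∃ f : V → Fin G.cliqueNum, Function.Surjective f ∧
          (∀ u v, G.Adj u v ↔ f u ≠ f v) ∧
          ∀ i j : Fin G.cliqueNum,
            (Finset.univ.filter fun v => f v = i).card
              = (Finset.univ.filter fun v => f v = j).card)) := by
  have hw := QBound.two_le_cliqueNum G hcard hconn
  haveI : Nonempty V := hconn.nonempty
  change qIndex G = QBound.bnd G ↔ _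
  rw [QBound.qIndex_eq_iff G hw]
  constructor
  · rintro ⟨x, hx, hQ⟩
    obtain ⟨y, hy, hyQ⟩ := QBound.exists_pos_eigenvector G hw hconn x hx hQ
    have ht := QBound.nonadj_trans G hw y hy hyQ
    rcases hw.eq_or_lt with h2 | h3
    · exact Or.inl ⟨h2.symm, QBound.exists_partition G ht 2 h2⟩
    · obtain ⟨f, hf, hadj⟩ := QBound.exists_partition G ht _ rfl
      refine Or.inr ⟨h3, f, hf, hadj, fun i j => ?_⟩
      obtain ⟨u, rfl⟩ := hf i
      obtain ⟨v, rfl⟩ := hf j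
      have hu := QBound.equal_sizes G rfl h3 f hf hadj y hy hyQ u
      have hv := QBound.equal_sizes G rfl h3 f hf hadj y hy hyQ v
      exact_mod_cast hu.trans hv.symm
  · rintro (⟨h2, f, hf, hadj⟩ | ⟨h3, f, hf, hadj, heq⟩)
    · exact QBound.eigen_bipartite G h2 f hf hadj
    · exact QBound.eigen_regular G h3 f hadj heq
end

section
/- For every finite simple connected graph G, the Q-index satisfies q(G) ≤ 2·∑_{v ∈ V(G)} (1 − 1/c(v)), where c(v) is the order of the largest clique of G containing the vertex v. -/
open scoped Classical
open Finset

variable {V : Type*}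

lemma cliqueAt_bdd [Fintype V] (G : SimpleGraph V) (v : V) :
    BddAbove {n | ∃ s : Finset V, G.IsNClique n s ∧ v ∈ s} := by
  refine ⟨Fintype.card V, ?_⟩
  rintro n ⟨s, hs, -⟩
  rw [← hs.card_eq]
  exact Finset.card_le_univ s

lemma le_cliqueAt [Fintype V] (G : SimpleGraph V) (v : V) (s : Finset V)
    (hs : G.IsClique (s : Set V)) (hv : v ∈ s) : s.card ≤ cliqueAt G v :=
  le_csSup (cliqueAt_bdd G v) ⟨s, ⟨hs, rfl⟩, hv⟩

/-- The quadratic form `F(p)` of the weighted Motzkin-Straus argument. -/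
noncomputable def auxF [Fintype V] (G : SimpleGraph V) (x : V → ℝ) (p q : V → ℝ) : ℝ :=
  ∑ u, ∑ v, (if G.Adj u v then (1 : ℝ) else 0) * (x u ^ 2 + x u * x v) * (p u * q v)

lemma aux_clique_s2 [Fintype V] (G : SimpleGraph V) (x a p : V → ℝ) (s : Finset V)
    (hp : ∀ v, 0 ≤ p v) (hps : ∀ v, p v ≠ 0 → v ∈ s)
    (hs : G.IsClique (s : Set V)) (ha0 : ∀ v, 0 ≤ a v)
    (ha : ∀ v ∈ s, 1 - 1 / (s.card : ℝ) ≤ a v) :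
    auxF G x p p ≤ 2 * (∑ v, p v * a v) * ∑ v, p v * x v ^ 2 := by
  have hz : ∀ v, v ∉ s → p v = 0 := fun v hv => by
    by_contra h; exact hv (hps v h)
  have e1 : ∀ f : V → ℝ, ∑ v, p v * f v = ∑ v ∈ s, p v * f v := fun f => by
    symm
    apply Finset.sum_subset (Finset.subset_univ s)
    intro v _ hv
    rw [hz v hv, zero_mul]
  have eF : auxF G x p p = (∑ v ∈ s, p v) * (∑ v ∈ s, p v * x v ^ 2)
      + (∑ v ∈ s, p v * x v) ^ 2 - 2 * ∑ v ∈ s, (p v * x v) ^ 2 := by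
    have h1 : auxF G x p p = ∑ u ∈ s, ∑ v ∈ s,
        (if G.Adj u v then (1 : ℝ) else 0) * (x u ^ 2 + x u * x v) * (p u * p v) := by
      unfold auxF
      rw [← Finset.sum_subset (Finset.subset_univ s)]
      · apply Finset.sum_congr rfl
        intro u _
        rw [← Finset.sum_subset (Finset.subset_univ s)]
        intro v _ hv
        simp [hz v hv]
      · intro u _ hu
        simp [hz u hu]
    have h2 : auxF G x p p = ∑ u ∈ s, ∑ v ∈ s,
        ((p u * x u ^ 2) * p v + (p u * x u) * (p v * x v)
          - if u = v then 2 * (p u * x u) ^ 2 else 0) := by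
      rw [h1]
      apply Finset.sum_congr rfl
      intro u hu
      apply Finset.sum_congr rfl
      intro v hv
      by_cases huv : u = v
      · subst huv
        simp
        ring
      · have := hs hu hv huv
        simp [this, huv]
        ring
    rw [h2]
    simp only [Finset.sum_sub_distrib, Finset.sum_add_distrib, Finset.sum_ite_eq,
      ← Finset.mul_sum, ← Finset.sum_mul]
    have h3 : ∑ u ∈ s, (if u ∈ s then 2 * (p u * x u) ^ 2 else 0)
        = 2 * ∑ u ∈ s, (p u * x u) ^ 2 := by
      rw [Finset.mul_sum]
      exact Finset.sum_congr rfl fun u hu => by simp [hu]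
    rw [h3]
    ring
  have hS : 0 ≤ ∑ v ∈ s, p v * x v ^ 2 :=
    Finset.sum_nonneg fun v _ => mul_nonneg (hp v) (sq_nonneg _)
  have hP : 0 ≤ ∑ v ∈ s, p v := Finset.sum_nonneg fun v _ => hp v
  have hA : (1 - 1 / (s.card : ℝ)) * ∑ v ∈ s, p v ≤ ∑ v ∈ s, p v * a v := by
    rw [Finset.mul_sum]
    apply Finset.sum_le_sum
    intro v hv
    rw [mul_comm]
    exact mul_le_mul_of_nonneg_left (ha v hv) (hp v)
  have hC : (∑ v ∈ s, p v * x v) ^ 2 ≤ s.card * ∑ v ∈ s, (p v * x v) ^ 2 :=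
    sq_sum_le_card_mul_sum_sq
  have hC2 : (∑ v ∈ s, p v * x v) ^ 2 ≤ (∑ v ∈ s, p v) * ∑ v ∈ s, p v * x v ^ 2 := by
    apply Finset.sum_sq_le_sum_mul_sum_of_sq_le_mul
    · exact fun v _ => hp v
    · exact fun v _ => mul_nonneg (hp v) (sq_nonneg _)
    · intro v _; exact le_of_eq (by ring)
  rw [eF, e1, e1]
  have hAS := mul_le_mul_of_nonneg_right hA hS
  rcases Nat.lt_or_ge s.card 2 with hk | hk
  · have h01 : s.card = 0 ∨ s.card = 1 := by omega
    rcases h01 with h | h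
    · rw [Finset.card_eq_zero] at h
      subst h
      simp
    · obtain ⟨w, rfl⟩ := Finset.card_eq_one.mp h
      simp only [Finset.sum_singleton]
      have := mul_nonneg (mul_nonneg (hp w) (ha0 w)) (mul_nonneg (hp w) (sq_nonneg (x w)))
      nlinarith
  · have hk' : (2 : ℝ) ≤ s.card := by exact_mod_cast hk
    have hi : (s.card : ℝ) * (1 / (s.card : ℝ)) = 1 := by field_simp
    have hi0 : 0 ≤ 1 / (s.card : ℝ) := by positivity
    have hi2 : 1 / (s.card : ℝ) ≤ 1 / 2 := by
      apply one_div_le_one_div_of_le <;> linarith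
    generalize 1 / (s.card : ℝ) = i at *
    generalize (s.card : ℝ) = k at *
    have h3 := mul_le_mul_of_nonneg_left hC hi0
    rw [← mul_assoc, mul_comm i k, hi, one_mul] at h3
    have h4 := mul_le_mul_of_nonneg_left hC2 (by linarith : 0 ≤ 1 - 2 * i)
    nlinarith

lemma auxF_comb [Fintype V] (G : SimpleGraph V) (x p d : V → ℝ) (t : ℝ) :
    auxF G x (fun v => p v + t * d v) (fun v => p v + t * d v) =
      auxF G x p p + t * (auxF G x p d + auxF G x d p) + t ^ 2 * auxF G x d d := by
  unfold auxF
  simp only [Finset.mul_sum, ← Finset.sum_add_distrib]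
  apply Finset.sum_congr rfl
  intro u _
  apply Finset.sum_congr rfl
  intro v _
  ring

lemma aux_main [Fintype V] (G : SimpleGraph V) (x a : V → ℝ) (ha0 : ∀ v, 0 < a v)
    (ha : ∀ s : Finset V, G.IsClique (s : Set V) → ∀ v ∈ s, 1 - 1 / (s.card : ℝ) ≤ a v) :
    ∀ (n : ℕ) (p : V → ℝ), (∀ v, 0 ≤ p v) → (Finset.univ.filter fun v => p v ≠ 0).card ≤ n →
      auxF G x p p ≤ 2 * (∑ v, p v * a v) * ∑ v, p v * x v ^ 2 := by
  intro n
  induction n with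
  | zero =>
    intro p hp hc
    refine aux_clique_s2 G x a p (Finset.univ.filter fun v => p v ≠ 0) hp (by simp) ?_
      (fun v => (ha0 v).le) (fun v hv => ?_)
    all_goals rw [Nat.le_zero, Finset.card_eq_zero] at hc
    · rw [hc]; simp
    · rw [hc] at hv; simp at hv
  | succ n ih =>
    intro p hp hc
    by_cases hcl : G.IsClique ((Finset.univ.filter fun v => p v ≠ 0 : Finset V) : Set V)
    · exact aux_clique_s2 G x a p _ hp (by simp) hcl (fun v => (ha0 v).le) (ha _ hcl)
    · have : ∃ u v, p u ≠ 0 ∧ p v ≠ 0 ∧ u ≠ v ∧ ¬ G.Adj u v := by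
        by_contra hcon
        push Not at hcon
        apply hcl
        intro u hu v hv huv
        simp at hu hv
        exact hcon u v hu hv huv
      obtain ⟨u, v, hu, hv, huv, hadj⟩ := this
      have hvu : ¬ G.Adj v u := fun h => hadj h.symm
      have hpu : 0 < p u := lt_of_le_of_ne (hp u) (Ne.symm hu)
      have hpv : 0 < p v := lt_of_le_of_ne (hp v) (Ne.symm hv)
      set d : V → ℝ := fun w => if w = u then a v else if w = v then - a u else 0 with hd
      have hdu : d u = a v := by simp [hd]
      have hdv : d v = - a u := by simp [hd, huv.symm]
      have hdw : ∀ w, w ≠ u → w ≠ v → d w = 0 := fun w h1 h2 => by simp [hd, h1, h2]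
      have hsum : ∀ f : V → ℝ, ∑ w, d w * f w = a v * f u - a u * f v := by
        intro f
        rw [Finset.sum_eq_add u v huv]
        · rw [hdu, hdv]; ring
        · intro w _ hw
          rw [hdw w hw.1 hw.2, zero_mul]
        · simp
        · simp
      have hdd : auxF G x d d = 0 := by
        unfold auxF
        apply Finset.sum_eq_zero
        intro w _
        apply Finset.sum_eq_zero
        intro z _
        by_cases h : G.Adj w z
        · have : d w * d z = 0 := by
            by_cases h1 : w = u
            · by_cases h2 : z = v
              · subst h1 h2; exact absurd h hadj
              · have : z ≠ u := fun h3 => by subst h1 h3; exact G.loopless.irrefl _ h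
                rw [hdw z this h2, mul_zero]
            · by_cases h2 : w = v
              · by_cases h3 : z = u
                · subst h2 h3; exact absurd h hvu
                · have : z ≠ v := fun h4 => by subst h2 h4; exact G.loopless.irrefl _ h
                  rw [hdw z h3 this, mul_zero]
              · rw [hdw w h1 h2, zero_mul]
          rw [this, mul_zero]
        · simp [h]
      -- the linear coefficient
      have key : ∀ t : ℝ, - p u ≤ t * a v → t * a u ≤ p v →
          (t * a v = - p u ∨ t * a u = p v) →
          auxF G x p p + t * (auxF G x p d + auxF G x d p) ≤
          2 * (∑ w, p w * a w) * (∑ w, p w * x w ^ 2 + t * ∑ w, d w * x w ^ 2) := by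
        intro t h1 h2 h3
        have h := ih (fun w => p w + t * d w) ?_ ?_
        · rw [auxF_comb, hdd] at h
          simp only [add_mul, Finset.sum_add_distrib, mul_assoc, ← Finset.mul_sum] at h
          rw [hsum a] at h
          simp only [mul_assoc]
          linarith
        · intro w
          by_cases hw1 : w = u
          · subst hw1; simp only [hdu]; linarith
          · by_cases hw2 : w = v
            · subst hw2; simp only [hdv]; linarith
            · simp only [hdw w hw1 hw2]; linarith [hp w]
        · have : (Finset.univ.filter fun w => p w + t * d w ≠ 0) ⊂
              (Finset.univ.filter fun w => p w ≠ 0) := by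
            rw [Finset.ssubset_iff_of_subset]
            · rcases h3 with h3 | h3
              · exact ⟨u, by simp [hu], by simp [hdu, h3]⟩
              · exact ⟨v, by simp [hv], by simp [hdv, h3]⟩
            · intro w hw
              simp only [Finset.mem_filter, Finset.mem_univ, true_and] at hw ⊢
              by_cases hw1 : w = u
              · subst hw1; exact hu
              · by_cases hw2 : w = v
                · subst hw2; exact hv
                · rwa [hdw w hw1 hw2, mul_zero, add_zero] at hw
          have := Finset.card_lt_card this
          omega
      have hau := ha0 u
      have hav := ha0 v
      have k1 := key (- p u / a v) (by rw [div_mul_cancel₀ _ hav.ne'])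
        (by have : - p u / a v * a u ≤ 0 := by
              apply mul_nonpos_of_nonpos_of_nonneg _ hau.le
              apply div_nonpos_of_nonpos_of_nonneg <;> linarith
            linarith)
        (Or.inl (by rw [div_mul_cancel₀ _ hav.ne']))
      have k2 := key (p v / a u)
        (by have : 0 ≤ p v / a u * a v := by positivity
            linarith)
        (by rw [div_mul_cancel₀ _ hau.ne'])
        (Or.inr (by rw [div_mul_cancel₀ _ hau.ne']))
      have t1 : 0 < p u / a v := by positivity
      have t2 : 0 < p v / a u := by positivity
      rw [neg_div] at k1
      generalize p u / a v = r at *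
      generalize p v / a u = q at *
      have k3 := mul_le_mul_of_nonneg_left k1 t2.le
      have k4 := mul_le_mul_of_nonneg_left k2 t1.le
      have k5 : (q + r) * auxF G x p p ≤
          (q + r) * (2 * (∑ w, p w * a w) * ∑ w, p w * x w ^ 2) := by linarith
      exact le_of_mul_le_mul_left k5 (by linarith)

/-- Vertex-localized bound for the `Q`-index: `q(G) ≤ 2 ∑_v (1 - 1/c(v))`. -/
theorem stmt2 {V : Type*} [Fintype V] [DecidableEq V]
    (G : SimpleGraph V) (hconn : G.Connected) :
    qIndex G ≤ 2 * ∑ v, (1 - 1 / (cliqueAt G v : ℝ)) := by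
  haveI := hconn.nonempty
  unfold qIndex maxEig
  rcases subsingleton_or_nontrivial V with hV | hV
  · have hQ : signlessLap G = 0 := by
      ext u v
      have h : ∀ w z : V, ¬ G.Adj w z := fun w z h => h.ne (Subsingleton.elim _ _)
      simp [signlessLap, degMx, adjMx, h, Matrix.diagonal_apply]
    have hR : (0 : ℝ) ≤ 2 * ∑ v, (1 - 1 / (cliqueAt G v : ℝ)) := by
      apply mul_nonneg zero_le_two
      apply Finset.sum_nonneg
      intro v _
      have h := le_cliqueAt G v {v} (by simp) (by simp)
      rw [Finset.card_singleton] at h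
      have h' : (1 : ℝ) ≤ cliqueAt G v := by exact_mod_cast h
      have := (div_le_one (by linarith : (0 : ℝ) < cliqueAt G v)).mpr h'
      linarith
    apply ciSup_le
    intro i
    rw [Matrix.IsHermitian.eigenvalues_eq]
    simpa [hQ] using hR
  · have hpos : ∀ v, 0 < 1 - 1 / (cliqueAt G v : ℝ) := by
      intro v
      obtain ⟨w, hw⟩ := hconn.preconnected.exists_adj_of_nontrivial v
      have h := le_cliqueAt G v {v, w} (by
        simp [SimpleGraph.isClique_iff, Set.pairwise_pair, hw, hw.symm]) (by simp)
      rw [Finset.card_pair hw.ne] at h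
      have h' : (2 : ℝ) ≤ cliqueAt G v := by exact_mod_cast h
      have := (div_lt_one (by linarith : (0 : ℝ) < cliqueAt G v)).mpr (by linarith : (1:ℝ) < _)
      linarith
    have hcl : ∀ s : Finset V, G.IsClique (s : Set V) → ∀ v ∈ s,
        1 - 1 / (s.card : ℝ) ≤ 1 - 1 / (cliqueAt G v : ℝ) := by
      intro s hs v hv
      have h := le_cliqueAt G v s hs hv
      have h0 : 0 < s.card := Finset.card_pos.mpr ⟨v, hv⟩
      have h' : (s.card : ℝ) ≤ cliqueAt G v := by exact_mod_cast h
      have h0' : (0 : ℝ) < s.card := by exact_mod_cast h0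
      have := one_div_le_one_div_of_le h0' h'
      linarith
    apply ciSup_le
    intro i
    set hQ := signlessLap_isHermitian G
    set x : V → ℝ := fun v => hQ.eigenvectorBasis i v with hx
    have hm := aux_main G x _ hpos hcl _ (fun _ => 1) (fun _ => zero_le_one) le_rfl
    have hn : ∑ v, x v ^ 2 = 1 := by
      have h := hQ.eigenvectorBasis.orthonormal.1 i
      have h2 := EuclideanSpace.real_norm_sq_eq (hQ.eigenvectorBasis i)
      rw [h] at h2
      simpa [hx] using h2.symm
    simp only [one_mul] at hm
    rw [hn, mul_one] at hm
    refine le_trans (le_of_eq ?_) hm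
    rw [Matrix.IsHermitian.eigenvalues_eq]
    have hd : ∀ u, (signlessLap G).mulVec x u =
        ∑ v, (if G.Adj u v then (1 : ℝ) else 0) * (x u + x v) := by
      intro u
      rw [signlessLap, Matrix.add_mulVec, Pi.add_apply, degMx, Matrix.mulVec_diagonal]
      simp only [Matrix.mulVec, dotProduct, adjMx, Matrix.of_apply, mul_add,
        Finset.sum_add_distrib, Finset.sum_mul]
    have he : ∀ u, (signlessLap G).mulVec (hQ.eigenvectorBasis i) u =
        ∑ v, (if G.Adj u v then (1 : ℝ) else 0) * (x u + x v) := hd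
    simp only [auxF, dotProduct, he, Finset.mul_sum, Pi.star_apply, star_trivial,
      RCLike.re_to_real]
    apply Finset.sum_congr rfl
    intro u _
    apply Finset.sum_congr rfl
    intro v _
    simp only [hx]
    ring
end

section
/- For every finite simple connected graph G and every real α with 0 ≤ α ≤ 1/2, the largest eigenvalue of the matrix A_α(G) = α·D(G) + (1 − α)·A(G) is at most ∑_{v ∈ V(G)} (1 − 1/c(v)). -/
open scoped Classical
open Finset

variable {V : Type*}

section aux
open Matrix

lemma aux_shift {V : Type*} [Fintype V] [DecidableEq V] (M : Matrix V V ℝ) (hM : ∀ u v, M u v = M v u)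
    (g t : V → ℝ) (u v : V) (huu : M u u = 0) (hvv : M v v = 0) (huv : M u v = 0) :
    ∃ L : ℝ, ∀ ε : ℝ,
      (t + ε • (Pi.single u 1 - Pi.single v 1)) ⬝ᵥ M *ᵥ (t + ε • (Pi.single u 1 - Pi.single v 1))
        - 4 * (∑ i, (t + ε • (Pi.single u 1 - Pi.single v 1) : V → ℝ) i) *
          ∑ i, (t + ε • (Pi.single u 1 - Pi.single v 1) : V → ℝ) i * g i
      = t ⬝ᵥ M *ᵥ t - 4 * (∑ i, t i) * (∑ i, t i * g i) + ε * L := by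
  have hvu : M v u = 0 := by rw [hM, huv]
  have hsym : ∀ w : V, t ⬝ᵥ M.col w = (M *ᵥ t) w := by
    intro w
    simp only [dotProduct, mulVec, Matrix.col_apply]
    exact Finset.sum_congr rfl fun i _ => by rw [hM i w]; ring
  refine ⟨2 * (M *ᵥ t) u - 2 * (M *ᵥ t) v - 4 * (∑ i, t i) * (g u - g v), fun ε => ?_⟩
  have h1 : (∑ i, (t + ε • (Pi.single u 1 - Pi.single v 1) : V → ℝ) i) = ∑ i, t i := by
    simp [Finset.sum_add_distrib, ← Finset.mul_sum, Finset.sum_sub_distrib]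
  have h2 : (∑ i, (t + ε • (Pi.single u 1 - Pi.single v 1) : V → ℝ) i * g i)
      = ∑ i, t i * g i + ε * (g u - g v) := by
    have : ∀ s : V → ℝ, ∑ i, s i * g i = s ⬝ᵥ g := fun s => rfl
    rw [this, this]
    simp [add_dotProduct, sub_dotProduct]
  rw [h1, h2]
  simp only [mulVec_add, mulVec_smul, mulVec_sub, add_dotProduct, dotProduct_add, smul_dotProduct,
    dotProduct_smul, sub_dotProduct, dotProduct_sub, mulVec_single_one, single_one_dotProduct, hsym,
    Matrix.col_apply, smul_eq_mul, huu, hvv, huv, hvu]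
  ring

lemma aux_reduce {V : Type*} [Fintype V] [DecidableEq V] (G : SimpleGraph V) (M : Matrix V V ℝ)
    (hM : ∀ u v, M u v = M v u) (h0 : ∀ u v, ¬ G.Adj u v → M u v = 0) (g : V → ℝ)
    (hcl : ∀ t : V → ℝ, (∀ i, 0 ≤ t i) →
      G.IsClique (↑(univ.filter fun i => t i ≠ 0) : Set V) →
      t ⬝ᵥ M *ᵥ t - 4 * (∑ i, t i) * (∑ i, t i * g i) ≤ 0) :
    ∀ n : ℕ, ∀ t : V → ℝ, (∀ i, 0 ≤ t i) → (univ.filter fun i => t i ≠ 0).card = n →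
      t ⬝ᵥ M *ᵥ t - 4 * (∑ i, t i) * (∑ i, t i * g i) ≤ 0 := by
  intro n
  induction n using Nat.strong_induction_on with
  | _ n ih =>
  intro t ht hn
  by_cases hc : G.IsClique (↑(univ.filter fun i => t i ≠ 0) : Set V)
  · exact hcl t ht hc
  · simp only [SimpleGraph.IsClique, Set.Pairwise] at hc
    push Not at hc
    obtain ⟨u, hu, v, hv, hne, hadj⟩ := hc
    simp only [coe_filter, mem_univ, true_and, Set.mem_ofPred_eq] at hu hv
    obtain ⟨L, hL⟩ := aux_shift M hM g t u v (h0 _ _ (G.loopless.irrefl u)) (h0 _ _ (G.loopless.irrefl v))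
      (h0 _ _ hadj)
    have key : ∀ ε : ℝ, 0 ≤ ε * L → 0 ≤ t u + ε → 0 ≤ t v - ε → (t u + ε = 0 ∨ t v - ε = 0) →
        t ⬝ᵥ M *ᵥ t - 4 * (∑ i, t i) * (∑ i, t i * g i) ≤ 0 := by
      intro ε h1 h2 h3 h4
      have hh := hL ε
      set s : V → ℝ := t + ε • (Pi.single u 1 - Pi.single v 1) with hs
      have su : s u = t u + ε := by simp [hs, hne]
      have sv : s v = t v - ε := by simp [hs, hne.symm]; ring
      have so : ∀ i, i ≠ u → i ≠ v → s i = t i := by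
        intro i hi hj; simp [hs, hi, hj]
      have := ih (univ.filter fun i => s i ≠ 0).card ?_ s ?_ rfl
      · linarith
      · rw [← hn]
        apply Finset.card_lt_card
        rw [Finset.ssubset_iff_of_subset]
        · rcases h4 with h4 | h4
          · exact ⟨u, by simp [hu], by simp [su, h4]⟩
          · exact ⟨v, by simp [hv], by simp [sv, h4]⟩
        · intro i
          simp only [mem_filter, mem_univ, true_and]
          intro hi
          by_cases hiu : i = u
          · rw [hiu]; exact hu
          by_cases hiv : i = v
          · rw [hiv]; exact hv
          rwa [so i hiu hiv] at hi
      · intro i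
        by_cases hiu : i = u
        · rw [hiu, su]; exact h2
        by_cases hiv : i = v
        · rw [hiv, sv]; exact h3
        rw [so i hiu hiv]; exact ht i
    rcases le_total 0 L with hl | hl
    · exact key (t v) (mul_nonneg (ht v) hl) (by linarith [ht u, ht v]) (by simp) (Or.inr (by simp))
    · exact key (-t u) (by nlinarith [ht u]) (by simp) (by linarith [ht u, ht v]) (Or.inl (by simp))

lemma aux_clique_s4 {V : Type*} [DecidableEq V] (K : Finset V) (t y : V → ℝ) (W : V → V → ℝ)
    (ht : ∀ i, 0 ≤ t i) (hd : ∀ i, W i i = 0)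
    (hW : ∀ u ∈ K, ∀ v ∈ K, u ≠ v → W u v * ((#K : ℝ) - 1) ≤ #K) :
    ∑ u ∈ K, ∑ v ∈ K, t u * (W u v * (y u + y v) ^ 2 * t v)
      ≤ 4 * (∑ u ∈ K, t u) * ∑ u ∈ K, t u * y u ^ 2 := by
  have hR : 0 ≤ ∑ u ∈ K, t u * y u ^ 2 := sum_nonneg fun i _ => mul_nonneg (ht i) (sq_nonneg _)
  have hT : 0 ≤ ∑ u ∈ K, t u := sum_nonneg fun i _ => ht i
  rcases Nat.lt_or_ge (#K) 2 with hk | hk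
  · have : ∑ u ∈ K, ∑ v ∈ K, t u * (W u v * (y u + y v) ^ 2 * t v) = 0 := by
      apply sum_eq_zero; intro u hu
      apply sum_eq_zero; intro v hv
      have : u = v := Finset.card_le_one.1 (by omega) u hu v hv
      rw [this, hd]; ring
    rw [this]; positivity
  have hk' : (2 : ℝ) ≤ #K := by exact_mod_cast hk
  have hCS : (∑ u ∈ K, t u * y u) ^ 2 ≤ (∑ u ∈ K, t u) * ∑ u ∈ K, t u * y u ^ 2 := by
    have := Finset.sum_mul_sq_le_sq_mul_sq K (fun u => √(t u)) (fun u => √(t u) * y u)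
    have c1 : ∑ u ∈ K, √(t u) * (√(t u) * y u) = ∑ u ∈ K, t u * y u :=
      sum_congr rfl fun u _ => by rw [← mul_assoc, Real.mul_self_sqrt (ht u)]
    have c2 : ∑ u ∈ K, √(t u) ^ 2 = ∑ u ∈ K, t u :=
      sum_congr rfl fun u _ => by rw [Real.sq_sqrt (ht u)]
    have c3 : ∑ u ∈ K, (√(t u) * y u) ^ 2 = ∑ u ∈ K, t u * y u ^ 2 :=
      sum_congr rfl fun u _ => by rw [mul_pow, Real.sq_sqrt (ht u)]
    rwa [c1, c2, c3] at this
  have hCS2 : (∑ u ∈ K, t u * y u) ^ 2 ≤ (#K : ℝ) * ∑ u ∈ K, (t u * y u) ^ 2 :=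
    sq_sum_le_card_mul_sum_sq
  have hexp : ∑ u ∈ K, ∑ v ∈ K, (t u * t v * (y u + y v) ^ 2 - if u = v then 4 * (t u * y u) ^ 2 else 0)
      = 2 * ((∑ u ∈ K, t u) * ∑ u ∈ K, t u * y u ^ 2) + 2 * (∑ u ∈ K, t u * y u) ^ 2
        - 4 * ∑ u ∈ K, (t u * y u) ^ 2 := by
    have e1 : ∑ u ∈ K, ∑ v ∈ K, (if u = v then 4 * (t u * y u) ^ 2 else 0)
        = 4 * ∑ u ∈ K, (t u * y u) ^ 2 := by
      rw [mul_sum]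
      exact sum_congr rfl fun u hu => by rw [Finset.sum_ite_eq]; simp [hu]
    have e2 : ∑ u ∈ K, ∑ v ∈ K, t u * t v * (y u + y v) ^ 2
        = (∑ u ∈ K, t u * y u ^ 2) * (∑ u ∈ K, t u) + (∑ u ∈ K, t u) * (∑ u ∈ K, t u * y u ^ 2)
          + 2 * ((∑ u ∈ K, t u * y u) * ∑ u ∈ K, t u * y u) := by
      simp only [sum_mul_sum]
      simp only [mul_sum, ← sum_add_distrib]
      exact sum_congr rfl fun u _ => sum_congr rfl fun v _ => by ring
    simp only [sum_sub_distrib]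
    rw [e1, e2]; ring
  have hle : ((#K : ℝ) - 1) * ∑ u ∈ K, ∑ v ∈ K, t u * (W u v * (y u + y v) ^ 2 * t v)
      ≤ #K * ∑ u ∈ K, ∑ v ∈ K, (t u * t v * (y u + y v) ^ 2 - if u = v then 4 * (t u * y u) ^ 2 else 0) := by
    simp only [mul_sum]
    refine sum_le_sum fun u hu => sum_le_sum fun v hv => ?_
    by_cases h : u = v
    · subst h; rw [hd]; simp only [if_true]; apply le_of_eq; ring
    · rw [if_neg h, sub_zero]
      have := mul_le_mul_of_nonneg_right (hW u hu v hv h)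
        (mul_nonneg (mul_nonneg (ht u) (ht v)) (sq_nonneg (y u + y v)))
      linarith
  rw [hexp] at hle
  have : ((#K : ℝ) - 1) * ∑ u ∈ K, ∑ v ∈ K, t u * (W u v * (y u + y v) ^ 2 * t v)
    ≤ ((#K : ℝ) - 1) * (4 * (∑ u ∈ K, t u) * ∑ u ∈ K, t u * y u ^ 2) := by
    nlinarith [mul_le_mul_of_nonneg_left hCS (by linarith : (0 : ℝ) ≤ #K - 2)]
  exact le_of_mul_le_mul_left this (by linarith)

lemma aux_le_cliqueAt {V : Type*} [Fintype V] (G : SimpleGraph V) (s : Finset V)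
    (hs : G.IsClique (s : Set V)) (v : V) (hv : v ∈ s) : #s ≤ cliqueAt G v := by
  apply le_csSup
  · refine ⟨Fintype.card V, ?_⟩
    rintro n ⟨s, hs, -⟩
    rw [← hs.card_eq]; exact Finset.card_le_univ s
  · exact ⟨s, ⟨hs, rfl⟩, hv⟩

lemma aux_a {V : Type*} [Fintype V] (G : SimpleGraph V) (s : Finset V)
    (hs : G.IsClique (s : Set V)) (v : V) (hv : v ∈ s) :
    1 - 1 / (#s : ℝ) ≤ 1 - 1 / (cliqueAt G v : ℝ) := by
  have h := aux_le_cliqueAt G s hs v hv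
  have h0 : 0 < #s := Finset.card_pos.2 ⟨v, hv⟩
  have : 1 / (cliqueAt G v : ℝ) ≤ 1 / (#s : ℝ) :=
    one_div_le_one_div_of_le (by exact_mod_cast h0) (by exact_mod_cast h)
  linarith

lemma aux_a_nonneg {V : Type*} [Fintype V] (G : SimpleGraph V) (v : V) :
    0 ≤ 1 - 1 / (cliqueAt G v : ℝ) := by
  have := aux_a G {v} (by simp) v (by simp)
  simpa using this

lemma aux_a_pos {V : Type*} [Fintype V] (G : SimpleGraph V) (u v : V) (h : G.Adj u v) :
    0 < 1 - 1 / (cliqueAt G u : ℝ) := by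
  have := aux_a G {u, v} (by
    rw [Finset.coe_pair, SimpleGraph.isClique_pair]; exact fun _ => h) u (by simp)
  rw [Finset.card_pair h.ne] at this
  norm_num at this ⊢
  linarith

lemma aux_main_s4 {V : Type*} [Fintype V] [DecidableEq V] (G : SimpleGraph V) (x : V → ℝ)
    (hx : ∀ i, 0 ≤ x i) :
    ∑ u, ∑ v, (if G.Adj u v then (x u + x v) ^ 2 else 0)
      ≤ 4 * (∑ v, (1 - 1 / (cliqueAt G v : ℝ))) * ∑ v, x v ^ 2 := by
  set a : V → ℝ := fun v => 1 - 1 / (cliqueAt G v : ℝ) with ha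
  have a0 : ∀ v, 0 ≤ a v := aux_a_nonneg G
  have ap : ∀ u v, G.Adj u v → 0 < a u := aux_a_pos G
  let W : V → V → ℝ := fun u v => if G.Adj u v then 1 / min (a u) (a v) else 0
  let y : V → ℝ := fun v => x v / √(a v)
  let M : Matrix V V ℝ := Matrix.of fun u v => W u v * (y u + y v) ^ 2
  have hWs : ∀ u v, W u v = W v u := by
    intro u v; simp only [W, G.adj_comm u v, min_comm (a u)]
  have hred := aux_reduce G M (fun u v => by simp only [M, Matrix.of_apply]; rw [hWs, add_comm])
    (fun u v h => by simp [M, W, h]) (fun v => y v ^ 2) ?_ _ a a0 rfl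
  · have h1 : ∑ v, a v * y v ^ 2 ≤ ∑ v, x v ^ 2 := by
      refine sum_le_sum fun v _ => ?_
      simp only [y, div_pow, Real.sq_sqrt (a0 v)]
      rcases (a0 v).eq_or_lt with h | h
      · rw [← h]; simp; positivity
      · rw [mul_div_cancel₀ _ h.ne']
    have h2 : ∑ u, ∑ v, (if G.Adj u v then (x u + x v) ^ 2 else 0) ≤ a ⬝ᵥ M *ᵥ a := by
      simp only [dotProduct, mulVec, mul_sum]
      refine sum_le_sum fun u _ => sum_le_sum fun v _ => ?_
      simp only [M, W, Matrix.of_apply]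
      split_ifs with h
      · have hu := ap u v h
        have hv := ap v u h.symm
        have hxu : x u = √(a u) * y u := by
          simp only [y]; rw [mul_div_cancel₀ _ (Real.sqrt_pos.2 hu).ne']
        have hxv : x v = √(a v) * y v := by
          simp only [y]; rw [mul_div_cancel₀ _ (Real.sqrt_pos.2 hv).ne']
        have hyu : 0 ≤ y u := div_nonneg (hx u) (Real.sqrt_nonneg _)
        have hyv : 0 ≤ y v := div_nonneg (hx v) (Real.sqrt_nonneg _)
        have hm : 0 < min (a u) (a v) := lt_min hu hv
        have hle : min (a u) (a v) * (x u + x v) ^ 2 ≤ a u * a v * (y u + y v) ^ 2 := by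
          rw [hxu, hxv]
          have hsu := Real.sq_sqrt hu.le
          have hsv := Real.sq_sqrt hv.le
          have m1 : min (a u) (a v) ≤ a u := min_le_left _ _
          have m2 : min (a u) (a v) ≤ a v := min_le_right _ _
          have m3 : min (a u) (a v) ≤ √(a u) * √(a v) := by
            rw [← Real.sqrt_mul hu.le]
            apply Real.le_sqrt_of_sq_le
            rw [sq]; exact mul_le_mul m1 m2 hm.le hu.le
          have e : (√(a u) * y u + √(a v) * y v) ^ 2
              = a u * y u ^ 2 + a v * y v ^ 2 + 2 * (√(a u) * √(a v)) * (y u * y v) := by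
            linear_combination (y u ^ 2) * hsu + (y v ^ 2) * hsv
          have e3 : (√(a u) * √(a v)) * (√(a u) * √(a v)) = a u * a v := by
            linear_combination √(a v) ^ 2 * hsu + a u * hsv
          rw [e]
          have t1 := mul_le_mul_of_nonneg_right m2 (mul_nonneg hu.le (sq_nonneg (y u)))
          have t2 := mul_le_mul_of_nonneg_right m1 (mul_nonneg hv.le (sq_nonneg (y v)))
          have t3 := mul_le_mul_of_nonneg_right (mul_le_mul_of_nonneg_right m3
            (by positivity : 0 ≤ √(a u) * √(a v))) (mul_nonneg hyu hyv)
          rw [e3] at t3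
          nlinarith
        have : a u * (1 / min (a u) (a v) * (y u + y v) ^ 2 * a v)
            = (a u * a v * (y u + y v) ^ 2) / min (a u) (a v) := by ring
        rw [this, le_div_iff₀ hm]; linarith
      · simp
    have h3 : 4 * (∑ v, a v) * ∑ v, a v * y v ^ 2 ≤ 4 * (∑ v, a v) * ∑ v, x v ^ 2 :=
      mul_le_mul_of_nonneg_left h1 (mul_nonneg (by norm_num) (sum_nonneg fun i _ => a0 i))
    linarith
  · intro t ht hc
    set K := univ.filter fun i => t i ≠ 0 with hK
    have z : ∀ i, i ∉ K → t i = 0 := by intro i hi; simpa [hK] using hi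
    have hcl := aux_clique_s4 K t y W ht (fun i => by simp [W]) (by
      intro u hu v hv huv
      have hadj : G.Adj u v := hc hu hv huv
      simp only [W, if_pos hadj]
      have hm : 0 < min (a u) (a v) := lt_min (ap u v hadj) (ap v u hadj.symm)
      have hk : 1 - 1 / (#K : ℝ) ≤ min (a u) (a v) := le_min (aux_a G K hc u hu) (aux_a G K hc v hv)
      have hpos : (0 : ℝ) < #K := by exact_mod_cast Finset.card_pos.2 ⟨u, hu⟩
      rw [one_div_mul_eq_div, div_le_iff₀ hm]
      have := mul_le_mul_of_nonneg_left hk hpos.le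
      rwa [mul_sub, mul_one_div_cancel hpos.ne', mul_one] at this)
    have s1 : ∑ i, t i = ∑ i ∈ K, t i :=
      (sum_subset (subset_univ K) fun i _ hi => z i hi).symm
    have s2 : ∑ i, t i * y i ^ 2 = ∑ i ∈ K, t i * y i ^ 2 :=
      (sum_subset (subset_univ K) fun i _ hi => by rw [z i hi, zero_mul]).symm
    have s3 : t ⬝ᵥ M *ᵥ t = ∑ u ∈ K, ∑ v ∈ K, t u * (W u v * (y u + y v) ^ 2 * t v) := by
      simp only [dotProduct, mulVec, mul_sum, M, Matrix.of_apply]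
      rw [← sum_subset (subset_univ K) fun i _ hi => by simp [z i hi]]
      refine sum_congr rfl fun u _ => ?_
      rw [← sum_subset (subset_univ K) fun i _ hi => by simp [z i hi]]
    rw [s1, s2, s3]; linarith

end aux

/-- Localized bound for the `A_α`-matrix, `0 ≤ α ≤ 1/2`:
`λ₁(A_α(G)) ≤ ∑_v (1 - 1/c(v))`. -/
theorem stmt4 {V : Type*} [Fintype V] [DecidableEq V]
    (G : SimpleGraph V) (hconn : G.Connected) (α : ℝ) (hα0 : 0 ≤ α) (hα1 : α ≤ 1 / 2)
    (hA : (α • degMx G + (1 - α) • adjMx G).IsHermitian) :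
    maxEig hA ≤ ∑ v, (1 - 1 / (cliqueAt G v : ℝ)) := by
  have : Nonempty V := hconn.nonempty
  apply ciSup_le
  intro i
  have heig := hA.eigenvalues_eq i
  set x : V → ℝ := fun v => hA.eigenvectorBasis i v with hxdef
  have hnorm : ∑ v, x v ^ 2 = 1 := by
    have h1 := hA.eigenvectorBasis.orthonormal.1 i
    have h2 := EuclideanSpace.norm_sq_eq (hA.eigenvectorBasis i)
    rw [h1] at h2
    simpa [hxdef] using h2.symm
  have hform : hA.eigenvalues i
      = ∑ u, ∑ v, (if G.Adj u v then α * x u ^ 2 + (1 - α) * (x u * x v) else 0) := by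
    rw [heig]
    simp only [RCLike.re_to_real, dotProduct, Pi.star_apply, star_trivial, Matrix.add_mulVec,
      Matrix.smul_mulVec, degMx, adjMx, Pi.add_apply, Pi.smul_apply, Matrix.mulVec_diagonal,
      smul_eq_mul]
    refine sum_congr rfl fun u _ => ?_
    change x u * (α * ((∑ v, if G.Adj u v then (1 : ℝ) else 0) * x u)
      + (1 - α) * ∑ v, (if G.Adj u v then (1 : ℝ) else 0) * x v) = _
    simp only [mul_sum, sum_mul, ← sum_add_distrib]
    refine sum_congr rfl fun v _ => ?_
    split_ifs <;> ring
  have hswap : ∑ u, ∑ v, (if G.Adj u v then x u ^ 2 else 0)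
      = ∑ u, ∑ v, (if G.Adj u v then x v ^ 2 else 0) := by
    rw [sum_comm]
    refine sum_congr rfl fun u _ => sum_congr rfl fun v _ => ?_
    simp only [G.adj_comm u v]
  have hform2 : hA.eigenvalues i
      = ∑ u, ∑ v, (if G.Adj u v then α * x u ^ 2 + (1 - α) * (x u * x v) else 0)
        + (α / 2) * (∑ u, ∑ v, (if G.Adj u v then x v ^ 2 else 0)
          - ∑ u, ∑ v, (if G.Adj u v then x u ^ 2 else 0)) := by
    rw [hform, hswap]; ring
  have hmain := aux_main_s4 G (fun v => |x v|) (fun v => abs_nonneg _)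
  simp only [sq_abs, hnorm] at hmain
  have hle : hA.eigenvalues i
      ≤ (1 / 4) * ∑ u, ∑ v, (if G.Adj u v then (|x u| + |x v|) ^ 2 else 0) := by
    rw [hform2]
    simp only [← sum_sub_distrib, mul_sum, ← sum_add_distrib]
    refine sum_le_sum fun u _ => sum_le_sum fun v _ => ?_
    split_ifs
    · have h1 : x u * x v ≤ |x u| * |x v| := by rw [← abs_mul]; exact le_abs_self _
      have h2 := mul_nonneg (by linarith : (0 : ℝ) ≤ 1 / 2 - α) (sq_nonneg (|x u| - |x v|))
      have h3 := mul_le_mul_of_nonneg_left h1 (by linarith : (0 : ℝ) ≤ 1 - α)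
      have h4 := sq_abs (x u)
      have h5 := sq_abs (x v)
      rw [← h4, ← h5]
      nlinarith
    · simp
  linarith
end

section
/- For every finite simple connected graph G, the largest adjacency eigenvalue λ₁(G) satisfies λ₁(G)² ≤ ∑_{e ∈ E(G)} 2(1 − 1/c(e)), where for an edge e = uv, c(e) is the order of the largest clique of G containing both endpoints of e. -/
open scoped Classical
open Finset

variable {V : Type*}

/-- Localized Motzkin–Straus, abstract form. -/
lemma localized_ms {V : Type*} [Fintype V] [DecidableEq V] (G : SimpleGraph V)
    (M : V → V → ℝ) (h0 : ∀ a b, ¬ G.Adj a b → M a b = 0)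
    (hM : ∀ s : Finset V, G.IsClique (s : Set V) → ∀ a ∈ s, ∀ b ∈ s, a ≠ b →
      ((#s : ℝ) - 1) * M a b ≤ #s) :
    ∀ (n : ℕ) (y : V → ℝ), (∀ a, 0 ≤ y a) → #{a | y a ≠ 0} = n →
      ∑ a, ∑ b, M a b * (y a * y b) ≤ (∑ a, y a) ^ 2 := by
  intro n
  induction n using Nat.strong_induction_on with
  | _ n ih =>
  intro y hy hn
  set s : Finset V := {a | y a ≠ 0} with hs
  have hns : ∀ a, a ∉ s → y a = 0 := by
    intro a ha
    by_contra h
    exact ha (by simp [hs, h])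
  by_cases hc : G.IsClique (s : Set V)
  · have key : ∀ a b, ((#s : ℝ) - 1) * (M a b * (y a * y b)) ≤
        #s * (y a * y b - if a = b then y a ^ 2 else 0) := by
      intro a b
      by_cases hab : a = b
      · subst hab
        rw [h0 a a (G.loopless.irrefl a)]
        simp [sq]
      · by_cases ha : a ∈ s
        · by_cases hb : b ∈ s
          · have := hM s hc a ha b hb hab
            have h2 := mul_le_mul_of_nonneg_right this (mul_nonneg (hy a) (hy b))
            simp only [hab, if_false, sub_zero]
            linarith
          · simp [hns b hb, hab]
        · simp [hns a ha, hab]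
    by_cases hk : 1 < #s
    · have hk' : (0:ℝ) < (#s : ℝ) - 1 := by
        have : (1:ℝ) < #s := by exact_mod_cast hk
        linarith
      have h1 : ((#s : ℝ) - 1) * ∑ a, ∑ b, M a b * (y a * y b) ≤
          #s * ((∑ a, y a) ^ 2 - ∑ a, y a ^ 2) := by
        calc _ = ∑ a, ∑ b, ((#s : ℝ) - 1) * (M a b * (y a * y b)) := by
              simp_rw [Finset.mul_sum]
          _ ≤ ∑ a, ∑ b, #s * (y a * y b - if a = b then y a ^ 2 else 0) :=
              Finset.sum_le_sum fun a _ => Finset.sum_le_sum fun b _ => key a b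
          _ = _ := by
              simp_rw [← Finset.mul_sum, Finset.sum_sub_distrib, sq (∑ a, y a),
                Finset.sum_mul_sum]
              simp
      have h2 : (∑ a, y a) ^ 2 ≤ #s * ∑ a, y a ^ 2 := by
        have e1 : ∑ a, y a = ∑ a ∈ s, y a :=
          (Finset.sum_subset (Finset.subset_univ s) (fun a _ ha => hns a ha)).symm
        have e2 : ∑ a, y a ^ 2 = ∑ a ∈ s, y a ^ 2 :=
          (Finset.sum_subset (Finset.subset_univ s)
            (fun a _ ha => by simp [hns a ha])).symm
        rw [e1, e2]
        exact sq_sum_le_card_mul_sum_sq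
      refine le_of_mul_le_mul_left ?_ hk'
      linarith
    · have hz : ∑ a, ∑ b, M a b * (y a * y b) = 0 := by
        refine Finset.sum_eq_zero fun a _ => Finset.sum_eq_zero fun b _ => ?_
        by_cases hab : a = b
        · subst hab
          rw [h0 a a (G.loopless.irrefl a)]; simp
        · by_cases ha : a ∈ s
          · by_cases hb : b ∈ s
            · exact absurd (Finset.one_lt_card.2 ⟨a, ha, b, hb, hab⟩) hk
            · simp [hns b hb]
          · simp [hns a ha]
      rw [hz]; positivity
  · have : ∃ u ∈ s, ∃ v ∈ s, u ≠ v ∧ ¬ G.Adj u v := by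
      by_contra hcon
      push Not at hcon
      exact hc fun u hu v hv huv => hcon u hu v hv huv
    obtain ⟨u, hu, v, hv, huv, hadj⟩ := this
    let d : V → ℝ := fun a => (if a = u then 1 else 0) - (if a = v then 1 else 0)
    have hd : ∑ a, d a = 0 := by simp [d]
    have hQ : ∀ a b, M a b * (d a * d b) = 0 := by
      intro a b
      by_cases h : G.Adj a b
      · have : d a * d b = 0 := by
          have hadj' : ¬ G.Adj v u := fun h => hadj h.symm
          simp only [d]
          by_cases h1 : a = u <;> by_cases h2 : a = v <;> by_cases h3 : b = u <;>
            by_cases h4 : b = v <;> simp_all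
        rw [this, mul_zero]
      · rw [h0 a b h, zero_mul]
    let L : ℝ := ∑ a, ∑ b, M a b * (y a * d b + d a * y b)
    have hf : ∀ t : ℝ, ∑ a, ∑ b, M a b * ((y a + t * d a) * (y b + t * d b)) =
        ∑ a, ∑ b, M a b * (y a * y b) + t * L := by
      intro t
      simp only [L, Finset.mul_sum, ← Finset.sum_add_distrib]
      refine Finset.sum_congr rfl fun a _ => Finset.sum_congr rfl fun b _ => ?_
      linear_combination t ^ 2 * hQ a b
    have hS : ∀ t : ℝ, ∑ a, (y a + t * d a) = ∑ a, y a := by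
      intro t
      rw [Finset.sum_add_distrib, ← Finset.mul_sum, hd]; ring
    have step : ∀ t : ℝ, 0 ≤ t * L → (∀ a, 0 ≤ y a + t * d a) →
        (∃ w ∈ s, y w + t * d w = 0) →
        ∑ a, ∑ b, M a b * (y a * y b) ≤ (∑ a, y a) ^ 2 := by
      rintro t ht hnn ⟨w, hw, hw0⟩
      have hlt : #{a | y a + t * d a ≠ 0} < n := by
        rw [← hn]
        refine Finset.card_lt_card ⟨?_, fun hsub => ?_⟩
        · intro a ha
          by_contra hna
          have hau : a ≠ u := fun h => hna (h ▸ hu)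
          have hav : a ≠ v := fun h => hna (h ▸ hv)
          simp [d, hau, hav, hns a hna] at ha
        · have := hsub hw
          simp [hw0] at this
      have := ih _ hlt (fun a => y a + t * d a) hnn rfl
      rw [hf, hS] at this
      linarith
    rcases le_total 0 L with hL | hL
    · refine step (y v) (mul_nonneg (hy v) hL) ?_ ⟨v, hv, by simp [d, huv.symm]⟩
      intro a
      have := hy a
      have := hy v
      by_cases h1 : a = u <;> by_cases h2 : a = v <;> simp [d, h1, h2, huv, huv.symm] <;>
        linarith [hy u]
    · refine step (- y u) (mul_nonneg_of_nonpos_of_nonpos (by linarith [hy u]) hL) ?_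
        ⟨u, hu, by simp [d, huv]⟩
      intro a
      have := hy a
      have := hy u
      by_cases h1 : a = u <;> by_cases h2 : a = v <;> simp [d, h1, h2, huv, huv.symm] <;>
        linarith [hy v]

lemma card_le_cliqueAtEdge {V : Type*} [Fintype V] (G : SimpleGraph V) (s : Finset V)
    (hs : G.IsClique (s : Set V)) {a b : V} (ha : a ∈ s) (hb : b ∈ s) :
    #s ≤ cliqueAtEdge G a b := by
  refine le_csSup ⟨Fintype.card V, ?_⟩ ⟨s, ⟨hs, rfl⟩, ha, hb⟩
  rintro n ⟨t, ht, -, -⟩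
  rw [← ht.card_eq]
  exact Finset.card_le_univ t

lemma two_le_cliqueAtEdge {V : Type*} [Fintype V] (G : SimpleGraph V) {a b : V}
    (h : G.Adj a b) : 2 ≤ cliqueAtEdge G a b := by
  have := card_le_cliqueAtEdge G {a, b} (by
    simp [SimpleGraph.isClique_iff, Set.pairwise_pair, h, h.symm]) (a := a) (b := b)
    (by simp) (by simp)
  rwa [Finset.card_pair h.ne] at this

/-- Edge-localized spectral Turán theorem: `λ₁(G)² ≤ ∑_{uv ∈ E(G)} 2 (1 - 1/c(uv))`.
(The double sum over ordered adjacent pairs counts each edge twice,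
which accounts for the factor `2`.) -/
theorem stmt5 {V : Type*} [Fintype V] [DecidableEq V]
    (G : SimpleGraph V) (hconn : G.Connected) :
    (lambda1 G) ^ 2 ≤
      ∑ u, ∑ v, (if G.Adj u v then (1 - 1 / (cliqueAtEdge G u v : ℝ)) else 0) := by
  haveI := hconn.nonempty
  obtain ⟨i, hi⟩ := exists_eq_ciSup_of_finite (f := (adjMx_isHermitian G).eigenvalues)
  have hlam : lambda1 G = (adjMx_isHermitian G).eigenvalues i := hi.symm
  set x : V → ℝ := fun v => (adjMx_isHermitian G).eigenvectorBasis i v with hx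
  have hnorm : ∑ v, x v ^ 2 = 1 := by
    have h := (adjMx_isHermitian G).eigenvectorBasis.orthonormal.1 i
    have h2 := EuclideanSpace.norm_sq_eq ((adjMx_isHermitian G).eigenvectorBasis i)
    rw [h] at h2
    simpa [hx] using h2.symm
  have hA : ∀ u, ∑ v, adjMx G u v * x v = lambda1 G * x u := by
    intro u
    have h := congrFun ((adjMx_isHermitian G).mulVec_eigenvectorBasis i) u
    rw [hlam]
    simpa [Matrix.mulVec, dotProduct, hx] using h
  have hquad : lambda1 G = ∑ u, ∑ v, adjMx G u v * (x u * x v) := by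
    calc lambda1 G = ∑ u, x u * (lambda1 G * x u) := by
          have h1 : lambda1 G * ∑ v, x v ^ 2 = lambda1 G := by rw [hnorm, mul_one]
          rw [Finset.mul_sum] at h1
          refine h1.symm.trans (Finset.sum_congr rfl fun u _ => by ring)
      _ = _ := by
          refine Finset.sum_congr rfl fun u _ => ?_
          rw [← hA, Finset.mul_sum]
          exact Finset.sum_congr rfl fun v _ => by ring
  let w : V → V → ℝ := fun u v =>
    if G.Adj u v then (1 - 1 / (cliqueAtEdge G u v : ℝ)) else 0
  have hw : ∀ u v, G.Adj u v → 0 < w u v := by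
    intro u v h
    have h2 : (2:ℝ) ≤ cliqueAtEdge G u v := by exact_mod_cast two_le_cliqueAtEdge G h
    simp only [w, h, if_true, sub_pos]
    rw [div_lt_one (by linarith)]
    linarith
  have hw0 : ∀ u v, 0 ≤ w u v := by
    intro u v
    by_cases h : G.Adj u v
    · exact (hw u v h).le
    · simp [w, h]
  have hms := localized_ms G (fun u v => (w u v)⁻¹) (by
      intro a b h; simp [w, h]) (by
      intro s hs a ha b hb hab
      have hadj : G.Adj a b := hs ha hb hab
      have h2 : (2:ℝ) ≤ cliqueAtEdge G a b := by exact_mod_cast two_le_cliqueAtEdge G hadj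
      have hk : (#s : ℝ) ≤ cliqueAtEdge G a b := by
        exact_mod_cast card_le_cliqueAtEdge G s hs ha hb
      rw [← div_eq_mul_inv, div_le_iff₀ (hw a b hadj)]
      simp only [w, hadj, if_true]
      have : (#s : ℝ) * (1 / (cliqueAtEdge G a b : ℝ)) ≤ 1 := by
        rw [mul_one_div, div_le_one (by linarith)]; exact hk
      linarith) _ (fun v => x v ^ 2) (fun v => sq_nonneg _) rfl
  simp only [hnorm, one_pow] at hms
  have hcs := Finset.sum_sq_le_sum_mul_sum_of_sq_eq_mul (Finset.univ : Finset (V × V))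
    (r := fun p => adjMx G p.1 p.2 * (x p.1 * x p.2))
    (f := fun p => w p.1 p.2) (g := fun p => (w p.1 p.2)⁻¹ * (x p.1 ^ 2 * x p.2 ^ 2))
    (fun p _ => hw0 _ _)
    (fun p _ => mul_nonneg (inv_nonneg.2 (hw0 _ _)) (by positivity))
    (fun p _ => by
      by_cases h : G.Adj p.1 p.2
      · have := (hw _ _ h).ne'
        simp only [adjMx, Matrix.of_apply, h, if_true]
        field_simp
      · simp [adjMx, w, h])
  simp only [Fintype.sum_prod_type] at hcs
  rw [← hquad] at hcs
  have hW : 0 ≤ ∑ u, ∑ v, w u v :=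
    Finset.sum_nonneg fun u _ => Finset.sum_nonneg fun v _ => hw0 u v
  calc lambda1 G ^ 2 ≤ _ := hcs
    _ ≤ (∑ u, ∑ v, w u v) * 1 := mul_le_mul_of_nonneg_left hms hW
    _ = _ := mul_one _
end

section
/- (Motzkin–Strauss) Let G be a finite simple graph on a nonempty vertex set V with clique number ω(G), and let x : V → ℝ satisfy x_v ≥ 0 for all v and ∑_{v ∈ V} x_v = 1. Then xᵀ A(G) x ≤ 1 − 1/ω(G), i.e., 2·∑_{uv ∈ E(G)} x_u x_v ≤ 1 − 1/ω(G). -/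
open scoped Classical
open Finset Matrix

variable {V : Type*}

lemma ms_clique {V : Type*} [Fintype V] [DecidableEq V] [Nonempty V]
    (G : SimpleGraph V) (x : V → ℝ) (hsum : ∑ v, x v = 1)
    (S : Finset V) (hS : ∀ v, v ∉ S → x v = 0) (hc : G.IsClique (S : Set V)) :
    x ⬝ᵥ (adjMx G).mulVec x ≤ 1 - 1 / (G.cliqueNum : ℝ) := by
  have hle : S.card ≤ G.cliqueNum := SimpleGraph.IsClique.card_le_cliqueNum (tc := hc)
  have hsS : ∑ v ∈ S, x v = 1 := by
    rw [← hsum]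
    exact Finset.sum_subset (Finset.subset_univ _) (fun v _ hv => hS v hv)
  have hqS : ∑ v ∈ S, x v ^ 2 = ∑ v, x v ^ 2 :=
    Finset.sum_subset (Finset.subset_univ _) (fun v _ hv => by simp [hS v hv])
  have hpos : 0 < S.card := by
    rcases Finset.eq_empty_or_nonempty S with h | h
    · simp [h] at hsS
    · exact h.card_pos
  have hcs : (∑ v ∈ S, x v) ^ 2 ≤ S.card * ∑ v ∈ S, x v ^ 2 := sq_sum_le_card_mul_sum_sq
  rw [hsS, hqS] at hcs
  have hQ : x ⬝ᵥ (adjMx G).mulVec x = 1 - ∑ v, x v ^ 2 := by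
    have h1 : ∀ u, x u * (adjMx G).mulVec x u = x u * (∑ v, x v) - x u ^ 2 := by
      intro u
      by_cases hu : u ∈ S
      · have : (adjMx G).mulVec x u = ∑ v, (x v - if u = v then x v else 0) := by
          simp only [Matrix.mulVec, dotProduct, adjMx, Matrix.of_apply]
          refine Finset.sum_congr rfl fun v _ => ?_
          by_cases huv : u = v
          · subst huv; simp
          · by_cases hv : v ∈ S
            · simp [huv, hc hu hv huv]
            · simp [hS v hv]
        rw [this, Finset.sum_sub_distrib]
        simp
        ring
      · simp [hS u hu]
    simp only [dotProduct]
    rw [Finset.sum_congr rfl fun u _ => h1 u, Finset.sum_sub_distrib, ← Finset.sum_mul, hsum]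
    ring
  rw [hQ]
  have hp : (0 : ℝ) < S.card := by exact_mod_cast hpos
  have h2 : 1 / (G.cliqueNum : ℝ) ≤ 1 / (S.card : ℝ) :=
    one_div_le_one_div_of_le hp (by exact_mod_cast hle)
  have h3 : 1 / (S.card : ℝ) ≤ ∑ v, x v ^ 2 := by
    rw [div_le_iff₀ hp]; linarith
  linarith

lemma ms_shift {V : Type*} [Fintype V] [DecidableEq V]
    (G : SimpleGraph V) (x : V → ℝ) (u v : V) (t : ℝ) (huv : ¬ G.Adj u v) :
    (x + t • (Pi.single u 1 - Pi.single v 1)) ⬝ᵥ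
      (adjMx G).mulVec (x + t • (Pi.single u 1 - Pi.single v 1)) =
    x ⬝ᵥ (adjMx G).mulVec x +
      2 * t * ((adjMx G).mulVec x u - (adjMx G).mulVec x v) := by
  have hvu : ¬ G.Adj v u := fun h => huv h.symm
  have hsym : ∀ w, x ⬝ᵥ (adjMx G).col w = (adjMx G).mulVec x w := by
    intro w
    simp only [Matrix.mulVec, dotProduct, adjMx, Matrix.of_apply, Matrix.col_apply]
    refine Finset.sum_congr rfl fun a _ => ?_
    rw [G.adj_comm, mul_comm]
  simp only [Matrix.mulVec_add, Matrix.mulVec_smul, Matrix.mulVec_sub, add_dotProduct,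
    dotProduct_add, smul_dotProduct, dotProduct_smul, sub_dotProduct, dotProduct_sub,
    Matrix.mulVec_single_one, single_one_dotProduct, hsym, smul_eq_mul]
  simp [adjMx, huv, hvu]
  ring

lemma ms_aux {V : Type*} [Fintype V] [DecidableEq V] [Nonempty V]
    (G : SimpleGraph V) (n : ℕ) : ∀ (x : V → ℝ) (_ : ∀ v, 0 ≤ x v) (_ : ∑ v, x v = 1)
    (S : Finset V) (_ : ∀ v, v ∉ S → x v = 0) (_ : S.card = n),
    x ⬝ᵥ (adjMx G).mulVec x ≤ 1 - 1 / (G.cliqueNum : ℝ) := by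
  induction n with
  | zero =>
    intro x hx hsum S hS hn
    rw [Finset.card_eq_zero] at hn
    subst hn
    simp [hS] at hsum
  | succ n ih =>
    intro x hx hsum S hS hn
    by_cases hc : G.IsClique (S : Set V)
    · exact ms_clique G x hsum S hS hc
    have key : ∃ u ∈ S, ∃ v ∈ S, u ≠ v ∧ ¬ G.Adj u v ∧
        (adjMx G).mulVec x v ≤ (adjMx G).mulVec x u := by
      simp only [SimpleGraph.IsClique, Set.Pairwise] at hc
      push Not at hc
      obtain ⟨u, hu, v, hv, hne, hadj⟩ := hc
      rcases le_total ((adjMx G).mulVec x v) ((adjMx G).mulVec x u) with h | h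
      · exact ⟨u, hu, v, hv, hne, hadj, h⟩
      · exact ⟨v, hv, u, hu, hne.symm, fun h => hadj h.symm, h⟩
    obtain ⟨u, hu, v, hv, hne, hadj, hle⟩ := key
    have hsh := ms_shift G x u v (x v) hadj
    have hm := mul_nonneg (hx v) (sub_nonneg.2 hle)
    refine le_trans (by rw [hsh]; linarith) (ih (x + x v • (Pi.single u 1 - Pi.single v 1))
      ?_ ?_ (S.erase v) ?_ ?_)
    · intro w
      by_cases h1 : w = v
      · subst h1; simp [hne.symm]
      · by_cases h2 : w = u
        · subst h2; simp [h1]; linarith [hx w, hx v]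
        · simp [h1, h2, hx w]
    · simp [Finset.sum_add_distrib, ← Finset.mul_sum, hsum]
    · intro w hw
      by_cases h1 : w = v
      · subst h1; simp [hne.symm]
      · have hwS : w ∉ S := fun h => hw (Finset.mem_erase.2 ⟨h1, h⟩)
        have h2 : w ≠ u := fun h => hwS (h ▸ hu)
        simp [h1, h2, hS w hwS]
    · rw [Finset.card_erase_of_mem hv, hn]; rfl

/-- **Motzkin–Strauss.** For any `x ≥ 0` with `∑ x_v = 1`,
`xᵀ A(G) x ≤ 1 - 1/ω(G)`. -/
theorem stmt7 {V : Type*} [Fintype V] [DecidableEq V] [Nonempty V]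
    (G : SimpleGraph V) (x : V → ℝ) (hx : ∀ v, 0 ≤ x v) (hsum : ∑ v, x v = 1) :
    x ⬝ᵥ (adjMx G).mulVec x ≤ 1 - 1 / (G.cliqueNum : ℝ) := by
  exact ms_aux G _ x hx hsum Finset.univ (fun v hv => absurd (Finset.mem_univ v) hv) rfl
end

section
/- (Weighted Motzkin–Strauss) Let G be a finite simple graph on a nonempty vertex set V, and for each edge uv let c(uv) be the maximum size of a clique of G containing both u and v (so c(uv) ≥ 2). Let W(G) be the symmetric matrix with W(G)_{uv} = c(uv)/(c(uv) − 1) if uv ∈ E(G) and 0 otherwise. Then for every x : V → ℝ with x_v ≥ 0 for all v and ∑_v x_v = 1, one has xᵀ W(G) x ≤ 1, i.e., 2·∑_{uv ∈ E(G)} (c(uv)/(c(uv) − 1))·x_u x_v ≤ 1. -/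
open scoped Classical
open Finset Matrix

variable {V : Type*}

lemma cae_comm {V : Type*} (G : SimpleGraph V) (u v : V) :
    cliqueAtEdge G u v = cliqueAtEdge G v u := by
  unfold cliqueAtEdge
  congr 1
  ext n
  constructor <;> rintro ⟨s, h, a, b⟩ <;> exact ⟨s, h, b, a⟩

lemma card_le_cae {V : Type*} [Fintype V] (G : SimpleGraph V) (u v : V) (s : Finset V)
    (hs : G.IsClique (s : Set V)) (hu : u ∈ s) (hv : v ∈ s) : s.card ≤ cliqueAtEdge G u v := by
  unfold cliqueAtEdge
  apply le_csSup
  · refine ⟨Fintype.card V, ?_⟩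
    rintro n ⟨t, ht, -, -⟩
    rw [← ht.card_eq]
    exact Finset.card_le_univ t
  · exact ⟨s, ⟨hs, rfl⟩, hu, hv⟩

lemma clique_case {V : Type*} [Fintype V] [DecidableEq V]
    (G : SimpleGraph V) (W : Matrix V V ℝ)
    (hW : ∀ u v, W u v =
      if G.Adj u v then (cliqueAtEdge G u v : ℝ) / ((cliqueAtEdge G u v : ℝ) - 1) else 0)
    (x : V → ℝ) (hx : ∀ v, 0 ≤ x v) (hsum : ∑ v, x v = 1) (s : Finset V)
    (hs : ∀ v, v ∉ s → x v = 0) (hc : G.IsClique (s : Set V)) :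
    x ⬝ᵥ W.mulVec x ≤ 1 := by
  have hsum' : ∑ v ∈ s, x v = 1 := by
    rw [← hsum]
    exact Finset.sum_subset (Finset.subset_univ s) (fun v _ h => hs v h)
  have hk : 1 ≤ s.card := by
    rcases s.eq_empty_or_nonempty with h | h
    · subst h; simp at hsum'
    · exact h.card_pos
  have hcs : (1 : ℝ) ≤ s.card * ∑ v, x v ^ 2 := by
    have h1 := sq_sum_le_card_mul_sum_sq (s := s) (f := x)
    rw [hsum'] at h1
    have h2 : ∑ v ∈ s, x v ^ 2 = ∑ v, x v ^ 2 :=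
      Finset.sum_subset (Finset.subset_univ s) (fun v _ h => by simp [hs v h])
    rw [h2] at h1
    linarith
  set k : ℝ := (s.card : ℝ) with hkdef
  have hk1 : (1 : ℝ) ≤ k := by rw [hkdef]; exact_mod_cast hk
  have hpt : ∀ u v, x u * (W u v * x v) ≤
      k / (k - 1) * (x u * x v - if u = v then x u ^ 2 else 0) := by
    intro u v
    by_cases huv : u = v
    · subst huv
      simp [hW, pow_two]
    by_cases hu : u ∈ s
    swap
    · simp [hs u hu]
    by_cases hv : v ∈ s
    swap
    · simp [hs v hv, huv]
    have hadj : G.Adj u v := hc hu hv huv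
    have hle := card_le_cae G u v s hc hu hv
    have h2 : 1 < s.card := Finset.one_lt_card.2 ⟨u, hu, v, hv, huv⟩
    have hleR : k ≤ (cliqueAtEdge G u v : ℝ) := by rw [hkdef]; exact_mod_cast hle
    have h2R : 1 < k := by rw [hkdef]; exact_mod_cast h2
    have hw : W u v ≤ k / (k - 1) := by
      rw [hW, if_pos hadj, div_le_div_iff₀ (by linarith) (by linarith)]
      nlinarith
    have := mul_le_mul_of_nonneg_right hw (mul_nonneg (hx u) (hx v))
    simp only [huv, if_false, sub_zero]
    linarith
  have hS : x ⬝ᵥ W.mulVec x ≤ k / (k - 1) * (1 - ∑ v, x v ^ 2) := by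
    calc x ⬝ᵥ W.mulVec x = ∑ u, ∑ v, x u * (W u v * x v) := by
          simp [dotProduct, mulVec, Finset.mul_sum]
      _ ≤ ∑ u, ∑ v, k / (k - 1) * (x u * x v - if u = v then x u ^ 2 else 0) :=
          Finset.sum_le_sum fun u _ => Finset.sum_le_sum fun v _ => hpt u v
      _ = k / (k - 1) * (1 - ∑ v, x v ^ 2) := by
          simp only [← Finset.mul_sum, Finset.sum_sub_distrib, hsum, Finset.sum_ite_eq,
            Finset.mem_univ, if_true, mul_one]
  refine hS.trans ?_
  rcases hk1.eq_or_lt with h | h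
  · rw [← h]; simp
  · rw [div_mul_eq_mul_div, div_le_one (by linarith)]
    nlinarith

lemma shift_form {V : Type*} [Fintype V] [DecidableEq V] (W : Matrix V V ℝ)
    (hsym : ∀ u v, W u v = W v u) (u v : V) (huu : W u u = 0) (hvv : W v v = 0)
    (huv : W u v = 0) (x : V → ℝ) (t : ℝ) :
    (x + t • (Pi.single u 1 - Pi.single v 1)) ⬝ᵥ
        W.mulVec (x + t • (Pi.single u 1 - Pi.single v 1)) =
      x ⬝ᵥ W.mulVec x + 2 * t * (W.mulVec x u - W.mulVec x v) := by
  have hvu : W v u = 0 := by rw [hsym, huv]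
  have hT : ∀ a, x ⬝ᵥ W.col a = W.mulVec x a := by
    intro a
    simp only [dotProduct, mulVec, Matrix.col_apply]
    exact Finset.sum_congr rfl fun i _ => by rw [hsym i a, mul_comm]
  simp only [Matrix.mulVec_add, Matrix.mulVec_smul, Matrix.mulVec_sub, add_dotProduct,
    dotProduct_add, smul_dotProduct, dotProduct_smul, sub_dotProduct, dotProduct_sub,
    Matrix.mulVec_single_one, single_dotProduct, one_mul, Matrix.col_apply, smul_eq_mul, hT,
    huu, hvv, huv, hvu]
  ring

theorem stmt8 {V : Type*} [Fintype V] [DecidableEq V] [Nonempty V]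
    (G : SimpleGraph V) (W : Matrix V V ℝ)
    (hW : ∀ u v, W u v =
      if G.Adj u v then (cliqueAtEdge G u v : ℝ) / ((cliqueAtEdge G u v : ℝ) - 1) else 0)
    (x : V → ℝ) (hx : ∀ v, 0 ≤ x v) (hsum : ∑ v, x v = 1) :
    x ⬝ᵥ W.mulVec x ≤ 1 := by
  have hsym : ∀ u v, W u v = W v u := by
    intro u v
    rw [hW, hW, cae_comm G u v]
    simp only [G.adj_comm u v]
  have key : ∀ (n : ℕ) (s : Finset V) (x : V → ℝ), s.card = n → (∀ v, 0 ≤ x v) →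
      ∑ v, x v = 1 → (∀ v, v ∉ s → x v = 0) → x ⬝ᵥ W.mulVec x ≤ 1 := by
    intro n
    induction n with
    | zero =>
      intro s x hn hx hsum hs
      exact clique_case G W hW x hx hsum s hs (by
        rw [Finset.card_eq_zero] at hn; subst hn; simp)
    | succ n ih =>
      intro s x hn hx hsum hs
      by_cases hc : G.IsClique (s : Set V)
      · exact clique_case G W hW x hx hsum s hs hc
      have hex : ∃ u ∈ s, ∃ v ∈ s, u ≠ v ∧ ¬ G.Adj u v ∧ W.mulVec x v ≤ W.mulVec x u := by
        simp only [SimpleGraph.IsClique, Set.Pairwise] at hc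
        push Not at hc
        obtain ⟨u, hu, v, hv, hne, hadj⟩ := hc
        rcases le_total (W.mulVec x v) (W.mulVec x u) with h | h
        · exact ⟨u, hu, v, hv, hne, hadj, h⟩
        · exact ⟨v, hv, u, hu, hne.symm, fun h' => hadj h'.symm, h⟩
      obtain ⟨u, hu, v, hv, hne, hadj, hle⟩ := hex
      have hform := shift_form W hsym u v (by simp [hW]) (by simp [hW]) (by simp [hW, hadj])
        x (x v)
      have hy := ih (s.erase v) (x + x v • (Pi.single u 1 - Pi.single v 1))
        (by rw [Finset.card_erase_of_mem hv, hn]; rfl)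
        (by
          intro w
          have h1 := hx w
          have h2 := hx v
          simp only [Pi.add_apply, Pi.smul_apply, Pi.sub_apply, Pi.single_apply, smul_eq_mul]
          by_cases hwv : w = v
          · subst hwv; simp [hne.symm]
          · by_cases hwu : w = u
            · simp [hwv, hwu, hne]; subst hwu; linarith
            · simp [hwv, hwu, h1])
        (by
          simp [Finset.sum_add_distrib, hsum, ← Finset.mul_sum])
        (by
          intro w hw
          by_cases hwv : w = v
          · subst hwv; simp [hne.symm]
          · have hws : w ∉ s := fun h => hw (Finset.mem_erase.2 ⟨hwv, h⟩)
            have hwu : w ≠ u := fun h => hws (h ▸ hu)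
            simp [hwv, hwu, hs w hws])
      have := mul_nonneg (hx v) (sub_nonneg.2 hle)
      linarith
  exact key _ Finset.univ x rfl hx hsum (by simp)
end

section
/- Let G be a finite simple connected graph on at least 2 vertices, let q = q(G), and let x : V → ℝ be a vector with x_v > 0 for all v satisfying Q(G)x = q·x and ∑_{v} x_v = 1. Define the symmetric matrix M by M_{uv} = (x_u + x_v)/(2√(x_u x_v)) if uv ∈ E(G) and M_{uv} = 0 otherwise, and set y_v = √(x_v). Then M y = (q/2)·y, ∑_v y_v² = 1, and q/2 equals the largest eigenvalue of M. -/
open scoped Classical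
open Finset

variable {V : Type*}

/-- A nonnegative symmetric matrix with a positive eigenvector has the corresponding
eigenvalue as its largest one. -/
lemma maxEig_eq_of_pos {V : Type*} [Fintype V] [DecidableEq V] [Nonempty V]
    {A : Matrix V V ℝ} (hA : A.IsHermitian) (hA0 : ∀ u v, 0 ≤ A u v)
    (y : V → ℝ) (hy : ∀ v, 0 < y v) (l : ℝ) (h : A.mulVec y = l • y) :
    maxEig hA = l := by
  unfold maxEig
  apply le_antisymm
  · apply ciSup_le
    intro i
    set z : V → ℝ := fun v => hA.eigenvectorBasis i v with hz
    have hev : ∀ u, ∑ v, A u v * z v = hA.eigenvalues i * z u := fun u =>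
      congrFun (hA.mulVec_eigenvectorBasis i) u
    have hyv : ∀ u, ∑ v, A u v * y v = l * y u := fun u => congrFun h u
    obtain ⟨u, hu⟩ := Finite.exists_max (fun v => |z v| / y v)
    have hb : ∀ v, |z v| ≤ |z u| / y u * y v := fun v => (div_le_iff₀ (hy v)).1 (hu v)
    have hzu : 0 < |z u| := by
      by_contra hn
      have h0 : |z u| = 0 := le_antisymm (not_lt.1 hn) (abs_nonneg _)
      apply hA.eigenvectorBasis.orthonormal.ne_zero i
      ext v
      have := hb v
      rw [h0, zero_div, zero_mul] at this
      exact abs_nonpos_iff.1 this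
    have key : hA.eigenvalues i * |z u| ≤ l * |z u| := by
      calc hA.eigenvalues i * |z u| ≤ |hA.eigenvalues i| * |z u| :=
            mul_le_mul_of_nonneg_right (le_abs_self _) (abs_nonneg _)
        _ = |∑ v, A u v * z v| := by rw [hev, abs_mul]
        _ ≤ ∑ v, |A u v * z v| := Finset.abs_sum_le_sum_abs _ _
        _ ≤ ∑ v, |z u| / y u * (A u v * y v) := by
            apply Finset.sum_le_sum
            intro v _
            rw [abs_mul, abs_of_nonneg (hA0 u v)]
            calc A u v * |z v| ≤ A u v * (|z u| / y u * y v) :=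
                  mul_le_mul_of_nonneg_left (hb v) (hA0 u v)
              _ = _ := by ring
        _ = l * |z u| := by
            rw [← Finset.mul_sum, hyv]
            have := (hy u).ne'
            field_simp
    exact le_of_mul_le_mul_right key hzu
  · have hm : l ∈ spectrum ℝ A := by
      rw [← Matrix.spectrum_toLin', ← Module.End.hasEigenvalue_iff_mem_spectrum]
      apply Module.End.hasEigenvalue_of_hasEigenvector (x := y)
      refine ⟨Module.End.mem_eigenspace_iff.2 (by simpa using h), ?_⟩
      intro h0
      obtain ⟨v⟩ := ‹Nonempty V›
      exact (hy v).ne' (congrFun h0 v)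
    rw [hA.spectrum_real_eq_range_eigenvalues] at hm
    obtain ⟨i, rfl⟩ := hm
    exact le_ciSup (Set.finite_range _).bddAbove i

/-- The auxiliary matrix `M` with entries `(x_u + x_v)/(2√(x_u x_v))` on edges satisfies
`M y = (q/2) y` for `y_v = √(x_v)`, where `x` is the positive unit-`ℓ¹` eigenvector of
`Q(G)` for `q = q(G)`; moreover `∑ y_v² = 1` and `q/2` is the largest eigenvalue of `M`. -/
theorem stmt9 {V : Type*} [Fintype V] [DecidableEq V]
    (G : SimpleGraph V) (hcard : 2 ≤ Fintype.card V) (hconn : G.Connected)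
    (x : V → ℝ) (hx : ∀ v, 0 < x v) (hsum : ∑ v, x v = 1)
    (heig : (signlessLap G).mulVec x = qIndex G • x)
    (M : Matrix V V ℝ)
    (hM : ∀ u v, M u v =
      if G.Adj u v then (x u + x v) / (2 * Real.sqrt (x u * x v)) else 0)
    (hMh : M.IsHermitian)
    (y : V → ℝ) (hy : ∀ v, y v = Real.sqrt (x v)) :
    M.mulVec y = (qIndex G / 2) • y ∧ (∑ v, (y v) ^ 2 = 1) ∧
      maxEig hMh = qIndex G / 2 := by
  have hne : Nonempty V := hconn.nonempty
  have hy0 : ∀ v, 0 < y v := fun v => by rw [hy]; exact Real.sqrt_pos.2 (hx v)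
  have hy2 : ∀ v, x v = y v ^ 2 := fun v => by rw [hy, Real.sq_sqrt (hx v).le]
  have hM' : ∀ u v, M u v = if G.Adj u v then (x u + x v) / (2 * (y u * y v)) else 0 := by
    intro u v
    rw [hM, Real.sqrt_mul (hx u).le, ← hy, ← hy]
  have h1 : M.mulVec y = (qIndex G / 2) • y := by
    ext u
    have e := congrFun heig u
    have hl : (signlessLap G).mulVec x u = ∑ v, if G.Adj u v then x u + x v else 0 := by
      simp only [signlessLap, Matrix.add_mulVec, Pi.add_apply, degMx, Matrix.mulVec_diagonal]
      simp only [Matrix.mulVec, dotProduct, adjMx, Matrix.of_apply]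
      rw [Finset.sum_mul, ← Finset.sum_add_distrib]
      refine Finset.sum_congr rfl fun v _ => ?_
      split_ifs <;> simp
    rw [hl, Pi.smul_apply, smul_eq_mul] at e
    have hr : M.mulVec y u = (∑ v, if G.Adj u v then x u + x v else 0) / (2 * y u) := by
      rw [Finset.sum_div]
      refine Finset.sum_congr rfl fun v _ => ?_
      have a := (hy0 u).ne'
      have b := (hy0 v).ne'
      change M u v * y v = _
      rw [hM']
      split_ifs
      · field_simp
      · simp
    have a := (hy0 u).ne'
    rw [hr, e, Pi.smul_apply, smul_eq_mul, hy2 u]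
    field_simp
  refine ⟨h1, ?_, ?_⟩
  · rw [← hsum]
    exact Finset.sum_congr rfl fun v _ => (hy2 v).symm
  · refine maxEig_eq_of_pos hMh (fun u v => ?_) y hy0 _ h1
    rw [hM']
    split_ifs
    · have := hx u
      have := hx v
      have := hy0 u
      have := hy0 v
      positivity
    · exact le_rfl
end
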